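/- arXiv:2009.04757 — 3 statements merged into one kernel-verified Lean document; each statement's English description precedes it below -/
import Mathlib

section
/- Multiplicative Orthogonality Criterion (Kátai; Bourgain–Sarnak–Ziegler): let (f_n)_{n≥1} be a bounded sequence of complex numbers. Assume there exists P_0 such that for all primes p ≠ q with p, q ≥ P_0, lim_{N→∞} (1/N) Σ_{n≤N} f_{pn} · conj(f_{qn}) = 0. Then for every multiplicative function u : ℕ → ℂ with |u(n)| ≤ 1 for all n, lim_{N→∞} (1/N) Σ_{n≤N} f_n u(n) = 0. -/
open Filter Topology

lemma moc_exists_primes (P0 : ℕ) (B : ℝ) : ∃ P : Finset ℕ,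
    (∀ p ∈ P, p.Prime ∧ P0 ≤ p) ∧ B ≤ ∑ p ∈ P, (1 / (p : ℝ)) := by
  have h := not_summable_one_div_on_primes
  rw [← summable_nat_add_iff P0, not_summable_iff_tendsto_nat_atTop_of_nonneg] at h
  · obtain ⟨n, hn⟩ := (h.eventually_ge_atTop B).exists
    refine ⟨(Finset.Ico P0 (P0 + n)).filter Nat.Prime, ?_, ?_⟩
    · intro p hp
      simp only [Finset.mem_filter, Finset.mem_Ico] at hp
      exact ⟨hp.2, hp.1.1⟩
    · refine hn.trans (le_of_eq ?_)
      rw [Finset.sum_filter, Finset.sum_Ico_eq_sum_range]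
      simp only [Set.indicator_apply, Set.mem_setOf_eq, add_tsub_cancel_left]
      refine Finset.sum_congr rfl fun i _ => ?_
      rw [add_comm i P0]
  · intro n
    exact Set.indicator_nonneg (fun x _ => by positivity) _

lemma moc_count (N d : ℕ) :
    ∑ n ∈ Finset.Icc 1 N, (if d ∣ n then (1 : ℝ) else 0) = ((N / d : ℕ) : ℝ) := by
  rw [← Nat.Ioc_filter_dvd_card_eq_div, Finset.sum_boole]
  rfl

lemma moc_count_le (N d : ℕ) :
    ∑ n ∈ Finset.Icc 1 N, (if d ∣ n then (1 : ℝ) else 0) ≤ N / d := by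
  rw [moc_count]; exact Nat.cast_div_le

lemma moc_count_ge (N d : ℕ) (hd : 0 < d) :
    (N : ℝ) / d - 1 ≤ ∑ n ∈ Finset.Icc 1 N, (if d ∣ n then (1 : ℝ) else 0) := by
  rw [moc_count]
  have h := Nat.lt_div_mul_add hd (a := N)
  have hd' : (0 : ℝ) < d := by exact_mod_cast hd
  have h' : (N : ℝ) < (N / d : ℕ) * d + d := by exact_mod_cast h
  rw [sub_le_iff_le_add, div_le_iff₀ hd']
  nlinarith

/-- Turán–Kubilius. -/
lemma moc_tk (P : Finset ℕ) (hP : ∀ p ∈ P, p.Prime) (N : ℕ) (A : ℝ)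
    (hA : A = ∑ p ∈ P, (1 / (p : ℝ))) :
    ∑ n ∈ Finset.Icc 1 N, ((∑ p ∈ P, (if p ∣ n then (1 : ℝ) else 0)) - A) ^ 2
      ≤ N * A + 2 * A * P.card := by
  have hA0 : 0 ≤ A := by rw [hA]; positivity
  have h1 : N * A - P.card ≤ ∑ n ∈ Finset.Icc 1 N, ∑ p ∈ P, (if p ∣ n then (1 : ℝ) else 0) := by
    rw [Finset.sum_comm]
    have : N * A - P.card = ∑ p ∈ P, ((N : ℝ) / p - 1) := by
      rw [Finset.sum_sub_distrib, hA, Finset.mul_sum]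
      simp [div_eq_mul_inv]
    rw [this]
    exact Finset.sum_le_sum fun p hp => moc_count_ge N p (hP p hp).pos
  have h2 : ∑ n ∈ Finset.Icc 1 N, (∑ p ∈ P, (if p ∣ n then (1 : ℝ) else 0)) ^ 2
      ≤ N * A ^ 2 + N * A := by
    have e : ∀ n ∈ Finset.Icc 1 N, (∑ p ∈ P, (if p ∣ n then (1 : ℝ) else 0)) ^ 2 =
        ∑ p ∈ P, ∑ q ∈ P, (if p ∣ n then (1 : ℝ) else 0) * (if q ∣ n then (1 : ℝ) else 0) := by
      intro n _
      rw [sq, Finset.sum_mul_sum]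
    rw [Finset.sum_congr rfl e, Finset.sum_comm]
    have : N * A ^ 2 + N * A = ∑ p ∈ P, ∑ q ∈ P,
        ((N : ℝ) * ((1 / p) * (1 / q)) + if p = q then (N : ℝ) * (1 / p) else 0) := by
      simp only [Finset.sum_add_distrib, ← Finset.mul_sum]
      rw [← Finset.sum_mul, ← hA, sq]
      congr 1
      rw [hA, Finset.mul_sum]
      refine Finset.sum_congr rfl fun p hp => ?_
      rw [Finset.sum_ite_eq, if_pos hp]
    rw [this]
    refine Finset.sum_le_sum fun p hp => ?_
    rw [Finset.sum_comm]
    refine Finset.sum_le_sum fun q hq => ?_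
    by_cases hpq : p = q
    · subst hpq
      have := moc_count_le N p
      rw [if_pos rfl]
      have h3 : ∀ n ∈ Finset.Icc 1 N, (if p ∣ n then (1 : ℝ) else 0) *
        (if p ∣ n then (1 : ℝ) else 0) = (if p ∣ n then (1 : ℝ) else 0) := by
        intro n _; split_ifs <;> simp
      rw [Finset.sum_congr rfl h3]
      have : (0 : ℝ) ≤ N * ((1 / p) * (1 / p)) := by positivity
      rw [mul_one_div (N : ℝ) (p : ℝ)]
      linarith
    · rw [if_neg hpq, add_zero]
      have hc : Nat.Coprime p q := (Nat.coprime_primes (hP p hp) (hP q hq)).2 hpq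
      have h3 : ∀ n ∈ Finset.Icc 1 N, (if p ∣ n then (1 : ℝ) else 0) *
        (if q ∣ n then (1 : ℝ) else 0) = (if p * q ∣ n then (1 : ℝ) else 0) := by
        intro n _
        have : p * q ∣ n ↔ p ∣ n ∧ q ∣ n :=
          ⟨fun h => ⟨(dvd_mul_right p q).trans h, (dvd_mul_left q p).trans h⟩,
            fun h => hc.mul_dvd_of_dvd_of_dvd h.1 h.2⟩
        by_cases a : p ∣ n <;> by_cases b : q ∣ n <;> simp [this, a, b]
      rw [Finset.sum_congr rfl h3]
      refine (moc_count_le N (p * q)).trans (le_of_eq ?_)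
      push_cast
      rw [one_div_mul_one_div, mul_one_div]
  have h3 : ∑ n ∈ Finset.Icc 1 N, ((∑ p ∈ P, (if p ∣ n then (1 : ℝ) else 0)) - A) ^ 2 =
      ∑ n ∈ Finset.Icc 1 N, (∑ p ∈ P, (if p ∣ n then (1 : ℝ) else 0)) ^ 2
      - 2 * A * ∑ n ∈ Finset.Icc 1 N, ∑ p ∈ P, (if p ∣ n then (1 : ℝ) else 0) + N * A ^ 2 := by
    simp only [sub_sq, Finset.sum_add_distrib, Finset.sum_sub_distrib, Finset.mul_sum,
      Finset.sum_const, Nat.card_Icc, nsmul_eq_mul, add_tsub_cancel_right]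
    congr 2
    refine Finset.sum_congr rfl fun n _ => ?_
    rw [Finset.sum_mul]
    refine Finset.sum_congr rfl fun p _ => ?_
    ring
  rw [h3]
  nlinarith

lemma moc_reindex {M : Type*} [AddCommMonoid M] (N p : ℕ) (hp : 0 < p) (g : ℕ → M) :
    ∑ n ∈ Finset.Icc 1 N, (if p ∣ n then g n else 0) =
      ∑ m ∈ Finset.Icc 1 N, (if p * m ≤ N then g (p * m) else 0) := by
  rw [← Finset.sum_filter, ← Finset.sum_filter]
  symm
  refine Finset.sum_nbij' (fun m => p * m) (fun n => n / p) ?_ ?_ ?_ ?_ ?_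
  · intro m hm
    simp only [Finset.mem_filter, Finset.mem_Icc] at hm ⊢
    exact ⟨⟨Nat.mul_pos hp hm.1.1, hm.2⟩, dvd_mul_right p m⟩
  · intro n hn
    simp only [Finset.mem_filter, Finset.mem_Icc] at hn ⊢
    obtain ⟨⟨h1, h2⟩, k, rfl⟩ := hn
    rw [Nat.mul_div_cancel_left k hp]
    exact ⟨⟨Nat.pos_of_mul_pos_left h1, (Nat.le_mul_of_pos_left k hp).trans h2⟩, h2⟩
  · intro m _
    exact Nat.mul_div_cancel_left m hp
  · intro n hn
    simp only [Finset.mem_filter, Finset.mem_Icc] at hn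
    exact Nat.mul_div_cancel' hn.2
  · intro m _
    rfl

lemma moc_step3 (f u : ℕ → ℂ) (C : ℝ) (hbd : ∀ n : ℕ, ‖f n‖ ≤ C)
    (hmul : ∀ m n : ℕ, Nat.Coprime m n → u (m * n) = u m * u n)
    (hu : ∀ n : ℕ, ‖u n‖ ≤ 1) (N p : ℕ) (hp : p.Prime) :
    ‖∑ n ∈ Finset.Icc 1 N, (if p ∣ n then f n * u n else 0) -
      ∑ m ∈ Finset.Icc 1 N, u m * (if p * m ≤ N then u p * f (p * m) else 0)‖
      ≤ 2 * C * (N * (1 / (p : ℝ) ^ 2)) := by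
  have hC : 0 ≤ C := (norm_nonneg _).trans (hbd 0)
  rw [moc_reindex N p hp.pos (fun n => f n * u n), ← Finset.sum_sub_distrib]
  have key : ∀ m ∈ Finset.Icc 1 N,
      ‖(if p * m ≤ N then f (p * m) * u (p * m) else 0) -
        u m * (if p * m ≤ N then u p * f (p * m) else 0)‖ ≤
      if p * m ≤ N then (if p ^ 2 ∣ p * m then 2 * C else 0) else 0 := by
    intro m _
    by_cases h : p * m ≤ N
    · simp only [if_pos h]
      by_cases hd : p ∣ m
      · have : p ^ 2 ∣ p * m := by rw [sq]; exact Nat.mul_dvd_mul_left p hd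
        rw [if_pos this]
        have h1 : ‖f (p * m) * u (p * m)‖ ≤ C := by
          rw [norm_mul]
          nlinarith [hbd (p * m), hu (p * m), norm_nonneg (f (p * m)), norm_nonneg (u (p * m))]
        have h2 : ‖u m * (u p * f (p * m))‖ ≤ C := by
          rw [← mul_assoc, norm_mul, norm_mul]
          have : ‖u m‖ * ‖u p‖ ≤ 1 := mul_le_one₀ (hu m) (norm_nonneg _) (hu p)
          nlinarith [hbd (p * m), norm_nonneg (f (p * m))]
        refine (norm_sub_le _ _).trans ?_
        linarith
      · rw [hmul p m ((Nat.Prime.coprime_iff_not_dvd hp).2 hd)]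
        have : f (p * m) * (u p * u m) - u m * (u p * f (p * m)) = 0 := by ring
        rw [this, norm_zero]
        split_ifs <;> positivity
    · simp [h]
  refine (norm_sum_le _ _).trans ((Finset.sum_le_sum key).trans ?_)
  rw [← moc_reindex N p hp.pos (fun n => if p ^ 2 ∣ n then 2 * C else 0)]
  have h4 : ∀ n ∈ Finset.Icc 1 N, (if p ∣ n then (if p ^ 2 ∣ n then 2 * C else 0) else 0)
      ≤ 2 * C * (if p ^ 2 ∣ n then (1 : ℝ) else 0) := by
    intro n _
    split_ifs <;> simp [hC]
  refine (Finset.sum_le_sum h4).trans ?_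
  rw [← Finset.mul_sum]
  have := moc_count_le N (p ^ 2)
  push_cast at this
  rw [mul_one_div]
  gcongr

/-- the truncated correlation -/
lemma moc_step4 (f u : ℕ → ℂ) (hu : ∀ n : ℕ, ‖u n‖ ≤ 1) (N : ℕ) (P : Finset ℕ) :
    ‖∑ m ∈ Finset.Icc 1 N, u m * ∑ p ∈ P, (if p * m ≤ N then u p * f (p * m) else 0)‖ ^ 2
      ≤ N * ∑ p ∈ P, ∑ q ∈ P, ‖∑ m ∈ Finset.Icc 1 N,
        (if p * m ≤ N ∧ q * m ≤ N then f (p * m) * (starRingEnd ℂ) (f (q * m)) else 0)‖ := by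
  set g : ℕ → ℂ := fun m => ∑ p ∈ P, (if p * m ≤ N then u p * f (p * m) else 0) with hg
  have h1 : ‖∑ m ∈ Finset.Icc 1 N, u m * g m‖ ≤ ∑ m ∈ Finset.Icc 1 N, ‖g m‖ := by
    refine (norm_sum_le _ _).trans (Finset.sum_le_sum fun m _ => ?_)
    rw [norm_mul]
    exact mul_le_of_le_one_left (norm_nonneg _) (hu m)
  have h2 : (∑ m ∈ Finset.Icc 1 N, ‖g m‖) ^ 2 ≤ N * ∑ m ∈ Finset.Icc 1 N, ‖g m‖ ^ 2 := by
    have := sq_sum_le_card_mul_sum_sq (s := Finset.Icc 1 N) (f := fun m => ‖g m‖)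
    simpa using this
  have h3 : ((∑ m ∈ Finset.Icc 1 N, ‖g m‖ ^ 2 : ℝ) : ℂ) = ∑ p ∈ P, ∑ q ∈ P,
      (u p * (starRingEnd ℂ) (u q)) * ∑ m ∈ Finset.Icc 1 N,
        (if p * m ≤ N ∧ q * m ≤ N then f (p * m) * (starRingEnd ℂ) (f (q * m)) else 0) := by
    simp only [Finset.mul_sum]
    push_cast
    have : ∀ m ∈ Finset.Icc 1 N, ((‖g m‖ : ℂ)) ^ 2 = ∑ p ∈ P, ∑ q ∈ P,
      (u p * (starRingEnd ℂ) (u q)) *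
        (if p * m ≤ N ∧ q * m ≤ N then f (p * m) * (starRingEnd ℂ) (f (q * m)) else 0) := by
      intro m _
      rw [← Complex.mul_conj', hg]
      simp only [map_sum, Finset.sum_mul_sum]
      refine Finset.sum_congr rfl fun p _ => Finset.sum_congr rfl fun q _ => ?_
      by_cases a : p * m ≤ N <;> by_cases b : q * m ≤ N <;> simp [a, b]
      ring
    rw [Finset.sum_congr rfl this, Finset.sum_comm]
    refine Finset.sum_congr rfl fun p _ => ?_
    rw [Finset.sum_comm]
  have h4 : ∑ m ∈ Finset.Icc 1 N, ‖g m‖ ^ 2 ≤ ∑ p ∈ P, ∑ q ∈ P, ‖∑ m ∈ Finset.Icc 1 N,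
        (if p * m ≤ N ∧ q * m ≤ N then f (p * m) * (starRingEnd ℂ) (f (q * m)) else 0)‖ := by
    have h0 : (0 : ℝ) ≤ ∑ m ∈ Finset.Icc 1 N, ‖g m‖ ^ 2 := by positivity
    rw [← Complex.norm_of_nonneg h0, h3]
    refine (norm_sum_le _ _).trans (Finset.sum_le_sum fun p _ => ?_)
    refine (norm_sum_le _ _).trans (Finset.sum_le_sum fun q _ => ?_)
    rw [norm_mul]
    refine mul_le_of_le_one_left (norm_nonneg _) ?_
    rw [norm_mul, RCLike.norm_conj]
    exact mul_le_one₀ (hu p) (norm_nonneg _) (hu q)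
  calc _ ≤ (∑ m ∈ Finset.Icc 1 N, ‖g m‖) ^ 2 := by gcongr
    _ ≤ _ := h2
    _ ≤ _ := by gcongr

lemma moc_diag (f : ℕ → ℂ) (C : ℝ) (hbd : ∀ n : ℕ, ‖f n‖ ≤ C) (N p : ℕ) (hp : 0 < p) :
    ‖∑ m ∈ Finset.Icc 1 N,
      (if p * m ≤ N ∧ p * m ≤ N then f (p * m) * (starRingEnd ℂ) (f (p * m)) else 0)‖
      ≤ C ^ 2 * (N * (1 / (p : ℝ))) := by
  have hC : 0 ≤ C := (norm_nonneg _).trans (hbd 0)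
  have : ∀ m ∈ Finset.Icc 1 N,
      ‖(if p * m ≤ N ∧ p * m ≤ N then f (p * m) * (starRingEnd ℂ) (f (p * m)) else 0)‖ ≤
      if p * m ≤ N then C ^ 2 else 0 := by
    intro m _
    by_cases h : p * m ≤ N
    · simp only [h, and_self, if_true, norm_mul, RCLike.norm_conj]
      rw [sq]
      exact mul_le_mul (hbd _) (hbd _) (norm_nonneg _) hC
    · simp [h]
  refine (norm_sum_le _ _).trans ((Finset.sum_le_sum this).trans ?_)
  rw [← moc_reindex N p hp (fun _ => C ^ 2)]
  have h4 : ∀ n ∈ Finset.Icc 1 N, (if p ∣ n then C ^ 2 else 0) =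
      C ^ 2 * (if p ∣ n then (1 : ℝ) else 0) := by
    intro n _
    split_ifs <;> simp
  rw [Finset.sum_congr rfl h4, ← Finset.mul_sum, mul_one_div]
  gcongr
  exact moc_count_le N p

lemma moc_offdiag (f : ℕ → ℂ) (p q : ℕ) (hp : 0 < p) (hq : 0 < q)
    (h : Tendsto
        (fun N : ℕ => (1 / (N : ℂ)) *
          ∑ n ∈ Finset.Icc 1 N, f (p * n) * (starRingEnd ℂ) (f (q * n)))
        atTop (nhds 0)) :
    Tendsto (fun N : ℕ => (1 / (N : ℝ)) * ‖∑ m ∈ Finset.Icc 1 N,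
      (if p * m ≤ N ∧ q * m ≤ N then f (p * m) * (starRingEnd ℂ) (f (q * m)) else 0)‖)
      atTop (nhds 0) := by
  have hM : Tendsto (fun N : ℕ => min (N / p) (N / q)) atTop atTop := by
    refine tendsto_atTop.2 fun b => ?_
    filter_upwards [eventually_ge_atTop (b * p + b * q)] with N hN
    refine le_min ?_ ?_
    · rw [Nat.le_div_iff_mul_le hp]; nlinarith
    · rw [Nat.le_div_iff_mul_le hq]; nlinarith
  have h2 := (h.comp hM).norm
  rw [norm_zero] at h2
  refine squeeze_zero (fun N => by positivity) (fun N => ?_) h2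
  have e : ∑ m ∈ Finset.Icc 1 N,
      (if p * m ≤ N ∧ q * m ≤ N then f (p * m) * (starRingEnd ℂ) (f (q * m)) else 0) =
      ∑ m ∈ Finset.Icc 1 (min (N / p) (N / q)), f (p * m) * (starRingEnd ℂ) (f (q * m)) := by
    rw [← Finset.sum_filter]
    refine Finset.sum_congr ?_ fun _ _ => rfl
    ext m
    simp only [Finset.mem_filter, Finset.mem_Icc, le_min_iff, Nat.le_div_iff_mul_le hp,
      Nat.le_div_iff_mul_le hq, mul_comm m]
    constructor
    · rintro ⟨⟨a, b⟩, c⟩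
      exact ⟨a, c⟩
    · rintro ⟨a, c⟩
      exact ⟨⟨a, (Nat.le_mul_of_pos_left m hp).trans c.1⟩, c⟩
  rw [e]
  simp only [Function.comp, norm_mul, norm_div, norm_one, Complex.norm_natCast]
  rcases Nat.eq_zero_or_pos (min (N / p) (N / q)) with h0 | h0
  · rw [h0]; simp
  · refine mul_le_mul_of_nonneg_right ?_ (norm_nonneg _)
    refine one_div_le_one_div_of_le (by exact_mod_cast h0) ?_
    exact_mod_cast (min_le_left _ _).trans (Nat.div_le_self N p)

/-- For a fixed finite set of primes, the eventual bound. -/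
lemma moc_main (f u : ℕ → ℂ) (C : ℝ) (hbd : ∀ n : ℕ, ‖f n‖ ≤ C)
    (hmul : ∀ m n : ℕ, Nat.Coprime m n → u (m * n) = u m * u n)
    (hu : ∀ n : ℕ, ‖u n‖ ≤ 1) (P : Finset ℕ) (hP : ∀ p ∈ P, p.Prime)
    (hcross : ∀ p ∈ P, ∀ q ∈ P, p ≠ q →
      Tendsto
        (fun N : ℕ => (1 / (N : ℂ)) *
          ∑ n ∈ Finset.Icc 1 N, f (p * n) * (starRingEnd ℂ) (f (q * n)))
        atTop (nhds 0)) (A : ℝ) (hA : A = ∑ p ∈ P, (1 / (p : ℝ))) :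
    ∀ᶠ N : ℕ in atTop, A * ‖∑ n ∈ Finset.Icc 1 N, f n * u n‖ ≤
      N * (C * √(A + 1) + 2 * C * (∑' n : ℕ, 1 / (n : ℝ) ^ 2) + √(C ^ 2 * A + 1)) := by
  have hC : 0 ≤ C := (norm_nonneg _).trans (hbd 0)
  have hA0 : 0 ≤ A := by rw [hA]; positivity
  set K : ℕ → ℕ → ℕ → ℝ := fun p q N => ‖∑ m ∈ Finset.Icc 1 N,
      (if p * m ≤ N ∧ q * m ≤ N then f (p * m) * (starRingEnd ℂ) (f (q * m)) else 0)‖ with hK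
  have hoff : Tendsto (fun N : ℕ => ∑ p ∈ P, ∑ q ∈ P,
      if p = q then 0 else (1 / (N : ℝ)) * K p q N) atTop (nhds 0) := by
    have : (0 : ℝ) = ∑ p ∈ P, ∑ q ∈ P, 0 := by simp
    rw [this]
    refine tendsto_finsetSum _ fun p hp => tendsto_finsetSum _ fun q hq => ?_
    by_cases hpq : p = q
    · simp [hpq]
    · simp only [if_neg hpq]
      exact moc_offdiag f p q (hP p hp).pos (hP q hq).pos (hcross p hp q hq hpq)
  filter_upwards [hoff.eventually_le_const zero_lt_one, eventually_gt_atTop 0,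
    eventually_ge_atTop (⌈2 * A * P.card⌉₊)] with N hN1 hN0 hN2
  have hN0' : (0 : ℝ) < N := by exact_mod_cast hN0
  have hN2' : 2 * A * P.card ≤ N := Nat.ceil_le.1 hN2
  -- the number of divisors
  set w : ℕ → ℝ := fun n => ∑ p ∈ P, (if p ∣ n then (1 : ℝ) else 0) with hw
  set T : ℂ := ∑ m ∈ Finset.Icc 1 N,
    u m * ∑ p ∈ P, (if p * m ≤ N then u p * f (p * m) else 0) with hT
  have e1 : ‖∑ n ∈ Finset.Icc 1 N, ((A : ℂ) - w n) * (f n * u n)‖ ≤ N * (C * √(A + 1)) := by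
    have a1 : ‖∑ n ∈ Finset.Icc 1 N, ((A : ℂ) - w n) * (f n * u n)‖ ≤
        C * ∑ n ∈ Finset.Icc 1 N, |w n - A| := by
      rw [Finset.mul_sum]
      refine (norm_sum_le _ _).trans (Finset.sum_le_sum fun n _ => ?_)
      rw [norm_mul, norm_mul, ← Complex.ofReal_sub, Complex.norm_real, Real.norm_eq_abs,
        abs_sub_comm, mul_comm]
      gcongr
      nlinarith [hbd n, hu n, norm_nonneg (f n), norm_nonneg (u n)]
    have a2 : (∑ n ∈ Finset.Icc 1 N, |w n - A|) ^ 2 ≤ N * ∑ n ∈ Finset.Icc 1 N, (w n - A) ^ 2 := by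
      have := sq_sum_le_card_mul_sum_sq (s := Finset.Icc 1 N) (f := fun n => |w n - A|)
      simpa using this
    have a3 := moc_tk P hP N A hA
    have a4 : ∑ n ∈ Finset.Icc 1 N, |w n - A| ≤ N * √(A + 1) := by
      refine abs_le_of_sq_le_sq' ?_ (by positivity) |>.2
      rw [mul_pow, Real.sq_sqrt (by positivity)]
      refine a2.trans ?_
      rw [sq, mul_assoc]
      gcongr
      refine a3.trans ?_
      linarith
    calc _ ≤ _ := a1
      _ ≤ C * (N * √(A + 1)) := by gcongr
      _ = _ := by ring
  have e2 : ‖∑ n ∈ Finset.Icc 1 N, (w n : ℂ) * (f n * u n) - T‖ ≤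
      N * (2 * C * (∑' n : ℕ, 1 / (n : ℝ) ^ 2)) := by
    have b1 : ∑ n ∈ Finset.Icc 1 N, (w n : ℂ) * (f n * u n) - T = ∑ p ∈ P,
      (∑ n ∈ Finset.Icc 1 N, (if p ∣ n then f n * u n else 0) -
      ∑ m ∈ Finset.Icc 1 N, u m * (if p * m ≤ N then u p * f (p * m) else 0)) := by
      rw [Finset.sum_sub_distrib, hT]
      congr 1
      · rw [Finset.sum_comm]
        refine Finset.sum_congr rfl fun n _ => ?_
        rw [hw]
        push_cast
        rw [Finset.sum_mul]
        refine Finset.sum_congr rfl fun p _ => ?_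
        split_ifs <;> simp
      · rw [Finset.sum_comm]
        refine Finset.sum_congr rfl fun n _ => ?_
        rw [Finset.mul_sum]
    rw [b1]
    refine (norm_sum_le _ _).trans ((Finset.sum_le_sum fun p hp =>
      moc_step3 f u C hbd hmul hu N p (hP p hp)).trans ?_)
    rw [← Finset.mul_sum, ← Finset.mul_sum]
    have : ∑ p ∈ P, 1 / (p : ℝ) ^ 2 ≤ ∑' n : ℕ, 1 / (n : ℝ) ^ 2 :=
      (Real.summable_one_div_nat_pow.2 one_lt_two).sum_le_tsum P (fun _ _ => by positivity)
    calc _ ≤ 2 * C * (N * ∑' n : ℕ, 1 / (n : ℝ) ^ 2) := by gcongr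
      _ = _ := by ring
  have e3 : ‖T‖ ≤ N * √(C ^ 2 * A + 1) := by
    refine abs_le_of_sq_le_sq' ?_ (by positivity) |>.2
    rw [mul_pow, Real.sq_sqrt (by positivity)]
    refine (moc_step4 f u hu N P).trans ?_
    rw [sq, mul_assoc]
    gcongr
    have c1 : ∀ p ∈ P, ∀ q ∈ P, K p q N ≤
        (if p = q then C ^ 2 * (N * (1 / (p : ℝ))) else 0) +
        N * (if p = q then 0 else (1 / (N : ℝ)) * K p q N) := by
      intro p hp q hq
      by_cases hpq : p = q
      · subst hpq
        simp only [if_true, mul_zero, add_zero]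
        exact moc_diag f C hbd N p (hP p hp).pos
      · simp only [if_neg hpq, zero_add]
        rw [← mul_assoc, mul_one_div_cancel hN0'.ne', one_mul]
    refine (Finset.sum_le_sum fun p hp => Finset.sum_le_sum fun q hq => c1 p hp q hq).trans ?_
    simp only [Finset.sum_add_distrib, ← Finset.mul_sum]
    have c2 : ∑ p ∈ P, ∑ q ∈ P, (if p = q then C ^ 2 * (N * (1 / (p : ℝ))) else 0) =
        N * (C ^ 2 * A) := by
      rw [hA, Finset.mul_sum, Finset.mul_sum]
      refine Finset.sum_congr rfl fun p hp => ?_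
      rw [Finset.sum_ite_eq, if_pos hp]
      ring
    rw [c2, mul_add]
    gcongr
  have hS : (A : ℂ) * ∑ n ∈ Finset.Icc 1 N, f n * u n =
      ∑ n ∈ Finset.Icc 1 N, ((A : ℂ) - w n) * (f n * u n) +
      (∑ n ∈ Finset.Icc 1 N, (w n : ℂ) * (f n * u n) - T) + T := by
    rw [Finset.mul_sum]
    simp only [sub_mul, Finset.sum_sub_distrib]
    ring
  have : A * ‖∑ n ∈ Finset.Icc 1 N, f n * u n‖ = ‖(A : ℂ) * ∑ n ∈ Finset.Icc 1 N, f n * u n‖ := by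
    rw [norm_mul, Complex.norm_of_nonneg hA0]
  rw [this, hS]
  refine (norm_add₃_le).trans ?_
  linarith

/-- Multiplicative Orthogonality Criterion (Kátai; Bourgain–Sarnak–Ziegler): if
`(f_n)` is a bounded sequence of complex numbers such that for all sufficiently large
distinct primes `p, q` one has `(1/N) Σ_{n≤N} f_{pn} conj(f_{qn}) → 0`, then for every
multiplicative function `u : ℕ → ℂ` bounded by `1`,
`(1/N) Σ_{n≤N} f_n u(n) → 0`. -/
theorem multiplicative_orthogonality_criterion (f : ℕ → ℂ) (C : ℝ)
    (hbd : ∀ n : ℕ, ‖f n‖ ≤ C)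
    (hcross : ∃ P0 : ℕ, ∀ p q : ℕ, p.Prime → q.Prime → p ≠ q → P0 ≤ p → P0 ≤ q →
      Tendsto
        (fun N : ℕ => (1 / (N : ℂ)) *
          ∑ n ∈ Finset.Icc 1 N, f (p * n) * (starRingEnd ℂ) (f (q * n)))
        atTop (nhds 0)) :
    ∀ u : ℕ → ℂ, u 1 = 1 →
      (∀ m n : ℕ, Nat.Coprime m n → u (m * n) = u m * u n) →
      (∀ n : ℕ, ‖u n‖ ≤ 1) →
      Tendsto (fun N : ℕ => (1 / (N : ℂ)) * ∑ n ∈ Finset.Icc 1 N, f n * u n)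
        atTop (nhds 0) := by
  intro u _ hmul hu
  obtain ⟨P0, hcross⟩ := hcross
  have hC : 0 ≤ C := (norm_nonneg _).trans (hbd 0)
  set D : ℝ := ∑' n : ℕ, 1 / (n : ℝ) ^ 2 with hD
  have hD0 : 0 ≤ D := tsum_nonneg fun _ => by positivity
  rw [Metric.tendsto_atTop']
  intro ε hε
  -- for A ≥ 1 the bound is at most E * √A
  set E : ℝ := 2 * C + 2 * C * D + (C + 1) with hE
  have hE0 : 0 < E := by positivity
  obtain ⟨P, hP, hB⟩ := moc_exists_primes P0 (max 1 ((2 * E / ε) ^ 2))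
  set A : ℝ := ∑ p ∈ P, (1 / (p : ℝ)) with hA
  have hA1 : 1 ≤ A := (le_max_left _ _).trans hB
  have hA2 : 2 * E / ε ≤ √A := Real.le_sqrt_of_sq_le ((le_max_right _ _).trans hB)
  have hs1 : 1 ≤ √A := Real.one_le_sqrt.2 hA1
  have hsA : √A ^ 2 = A := Real.sq_sqrt (by linarith)
  have key := moc_main f u C hbd hmul hu P (fun p hp => (hP p hp).1)
    (fun p hp q hq hpq => hcross p q (hP p hp).1 (hP q hq).1 hpq (hP p hp).2 (hP q hq).2) A hA
  have hbound : C * √(A + 1) + 2 * C * D + √(C ^ 2 * A + 1) ≤ E * √A := by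
    have b1 : √(A + 1) ≤ 2 * √A := by
      rw [Real.sqrt_le_left (by positivity)]
      rw [mul_pow, hsA]; linarith
    have b2 : √(C ^ 2 * A + 1) ≤ (C + 1) * √A := by
      rw [Real.sqrt_le_left (by positivity)]
      rw [mul_pow, hsA]; nlinarith
    have b3 : 2 * C * D ≤ 2 * C * D * √A := le_mul_of_one_le_right (by positivity) hs1
    have b4 : C * √(A + 1) ≤ C * (2 * √A) := by gcongr
    rw [hE]; linarith
  obtain ⟨N1, hN1⟩ := eventually_atTop.1 key
  refine ⟨N1, fun N hN => ?_⟩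
  have hk := hN1 N hN.le
  have hN0 : (0 : ℝ) < N := by
    have : 0 < N := by omega
    exact_mod_cast this
  rw [dist_zero_right, norm_mul, norm_div, norm_one, Complex.norm_natCast, one_div,
    inv_mul_lt_iff₀ hN0]
  set S := ‖∑ n ∈ Finset.Icc 1 N, f n * u n‖ with hS
  have h1 : A * S ≤ N * (E * √A) := hk.trans (by gcongr)
  have h2 : √A * S ≤ N * E := by
    have : √A * (√A * S) ≤ √A * (N * E) := by
      rw [← mul_assoc, ← sq, hsA]; linarith
    exact le_of_mul_le_mul_left this (by linarith)
  have h3 : 2 * E ≤ √A * ε := (div_le_iff₀ hε).1 hA2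
  have h4 : √A * S < √A * (N * ε) := by
    have : N * (2 * E) ≤ N * (√A * ε) := by gcongr
    have : 0 < N * E := by positivity
    linarith
  exact lt_of_mul_lt_mul_left h4 (by linarith)
end

section
/- The following three conditions are equivalent: (i) every topological dynamical system (T,X) with h_top(T,X) = 0 is Möbius orthogonal; (ii) for every topological dynamical system (T,X) with h_top(T,X) = 0 and every continuous f : X → ℂ, (1/N) Σ_{n≤N} f(T^n x) μ(n) → 0 as N → ∞ uniformly in x ∈ X; (iii) every topological dynamical system (T,X) with h_top(T,X) = 0 satisfies the strong MOMO property. -/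
open Filter Topology

/-- `(T,X)` is Möbius orthogonal. -/
def MobiusOrthogonal {X : Type} [MetricSpace X] [CompactSpace X] (T : X ≃ₜ X) : Prop :=
  ∀ (f : C(X, ℂ)) (x : X),
    Tendsto
      (fun N : ℕ => (1 / (N : ℂ)) *
        ∑ n ∈ Finset.Icc 1 N, f ((⇑T)^[n] x) * (ArithmeticFunction.moebius n : ℂ))
      atTop (nhds 0)

/-- `(T,X)` is Möbius orthogonal uniformly in the starting point. -/
def UniformlyMobiusOrthogonal {X : Type} [MetricSpace X] [CompactSpace X]
    (T : X ≃ₜ X) : Prop :=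
  ∀ f : C(X, ℂ),
    TendstoUniformly
      (fun (N : ℕ) (x : X) => (1 / (N : ℂ)) *
        ∑ n ∈ Finset.Icc 1 N, f ((⇑T)^[n] x) * (ArithmeticFunction.moebius n : ℂ))
      (fun _ => 0) atTop

/-- `(T,X)` satisfies the strong MOMO property (with respect to the Möbius function). -/
def StrongMOMO {X : Type} [MetricSpace X] [CompactSpace X] (T : X ≃ₜ X) : Prop :=
  ∀ b : ℕ → ℕ, b 0 = 0 → StrictMono b →
    Tendsto (fun k : ℕ => b (k + 1) - b k) atTop atTop →
    ∀ (xs : ℕ → X) (f : C(X, ℂ)),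
      Tendsto
        (fun K : ℕ => (1 / (b K : ℝ)) *
          ∑ k ∈ Finset.range K,
            ‖∑ n ∈ Finset.Ico (b k) (b (k + 1)),
              f ((⇑T)^[n - b k] (xs k)) * (ArithmeticFunction.moebius n : ℂ)‖)
        atTop (nhds 0)

namespace MomoAux

open Dynamics ExpGrowth Uniformity

/-- exponentials beat linear functions -/
lemma lin_le_exp (c A B δ : ℝ) (hδ : 0 < δ) :
    ∀ᶠ n : ℕ in atTop, (A * n + B) * Real.exp c ≤ Real.exp (δ * n) := by
  have h1 : Tendsto (fun x : ℝ => (A * x + B) * Real.exp c / Real.exp (δ * x)) atTop (nhds 0) := by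
    have ha : Tendsto (fun x : ℝ => x * Real.exp (-δ * x)) atTop (nhds 0) := by
      simpa using tendsto_rpow_mul_exp_neg_mul_atTop_nhds_zero 1 δ hδ
    have hb : Tendsto (fun x : ℝ => Real.exp (-δ * x)) atTop (nhds 0) := by
      simpa using tendsto_rpow_mul_exp_neg_mul_atTop_nhds_zero 0 δ hδ
    have := ((ha.const_mul A).add (hb.const_mul B)).mul_const (Real.exp c)
    simp only [mul_zero, add_zero, zero_mul] at this
    refine this.congr fun x => ?_
    rw [neg_mul, Real.exp_neg]; field_simp
  have h2 := (h1.comp tendsto_natCast_atTop_atTop).eventually (gt_mem_nhds one_pos)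
  filter_upwards [h2] with n hn
  simp only [Function.comp] at hn
  rw [div_lt_one (Real.exp_pos _)] at hn
  exact hn.le

lemma natCast_le_exp_of_real {m n : ℕ} {δ : ℝ} (h : (m : ℝ) ≤ Real.exp (δ * n)) :
    (m : ENNReal) ≤ EReal.exp ((δ : EReal) * (n : EReal)) := by
  have : ((δ : EReal) * (n : EReal)) = ((δ * n : ℝ) : EReal) := by push_cast; rfl
  rw [this, EReal.exp_coe, ← ENNReal.ofReal_natCast]
  exact ENNReal.ofReal_le_ofReal h

lemma real_of_natCast_le_exp {m n : ℕ} {δ : ℝ}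
    (h : (m : ENNReal) ≤ EReal.exp ((δ : EReal) * (n : EReal))) :
    (m : ℝ) ≤ Real.exp (δ * n) := by
  have : ((δ : EReal) * (n : EReal)) = ((δ * n : ℝ) : EReal) := by push_cast; rfl
  rw [this, EReal.exp_coe, ← ENNReal.ofReal_natCast] at h
  exact (ENNReal.ofReal_le_ofReal_iff (Real.exp_pos _).le).1 h

lemma le_zero_of_forall_pos {a : EReal} (h : ∀ δ : ℝ, 0 < δ → a ≤ (δ : EReal)) : a ≤ 0 := by
  refine le_of_forall_gt_imp_ge_of_dense fun c hc => ?_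
  obtain ⟨r, hr0, hr⟩ := EReal.lt_iff_exists_real_btwn.1 hc
  exact (h r (by exact_mod_cast hr0)).trans hr.le

/-- linear covers give zero entropy -/
lemma entourage_le_zero_of_linear {P : Type*} (S : P → P) (F : Set P) (U : SetRel P P) (C : ℕ)
    (h : ∀ n : ℕ, ∃ s : Finset P, IsDynCoverOf S F U n s ∧ s.card ≤ n + C) :
    coverEntropyEntourage S F U ≤ 0 := by
  refine le_zero_of_forall_pos fun δ hδ => ?_
  rw [coverEntropyEntourage]
  refine Eventually.expGrowthSup_le ?_
  filter_upwards [lin_le_exp 1 1 C δ hδ] with n hn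
  obtain ⟨s, hs, hc⟩ := h n
  have h1 : ((coverMincard S F U n : ℕ∞) : ENNReal) ≤ ((s.card : ℕ) : ENNReal) := by
    exact_mod_cast hs.coverMincard_le_card
  refine h1.trans (natCast_le_exp_of_real (le_trans ?_ hn))
  have h2 : (s.card : ℝ) ≤ n + C := by exact_mod_cast hc
  have h3 : (1 : ℝ) ≤ Real.exp 1 := Real.one_le_exp (by norm_num)
  have h4 : (0 : ℝ) ≤ n + C := by positivity
  nlinarith

lemma entourage_le_of_inv {P : Type*} (S : P → P) (F : Set P) (U : SetRel P P) [U.IsSymm]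
    (hF : Set.MapsTo S F F) (δ : ℝ) (n : ℕ) (hn : n ≠ 0) (s : Finset P)
    (hs : IsDynCoverOf S F U n s) (hc : (s.card : ℝ) ≤ Real.exp (δ * n)) :
    coverEntropyEntourage S F (SetRel.comp U U) ≤ (δ : EReal) := by
  refine (hs.coverEntropyEntourage_le_log_card_div hF hn).trans ?_
  rw [EReal.div_le_iff_le_mul (by exact_mod_cast Nat.pos_of_ne_zero hn) (EReal.natCast_ne_top n),
    ← EReal.log_exp ((n : EReal) * δ), mul_comm]
  exact ENNReal.log_monotone (natCast_le_exp_of_real hc)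

lemma exists_cover {X : Type*} [UniformSpace X] (T : X → X)
    (hT : coverEntropy T Set.univ = 0) {U : SetRel X X} (hU : U ∈ 𝓤 X) (δ : ℝ) (hδ : 0 < δ) :
    ∀ᶠ n : ℕ in atTop, ∃ s : Finset X, IsDynCoverOf T Set.univ U n s ∧
      (s.card : ℝ) ≤ Real.exp (δ * n) := by
  have h0 : coverEntropyEntourage T Set.univ U < (δ : EReal) :=
    ((coverEntropyEntourage_le_coverEntropy T _ hU).trans hT.le).trans_lt (by exact_mod_cast hδ)
  filter_upwards [eventually_le_exp h0] with n hn
  have hlt : coverMincard T Set.univ U n < ⊤ := by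
    rw [lt_top_iff_ne_top]
    intro htop
    rw [htop] at hn
    have : ((δ : EReal) * (n : EReal)) = ((δ * n : ℝ) : EReal) := by push_cast; rfl
    rw [this, EReal.exp_coe] at hn
    simp at hn
  obtain ⟨s, hs, hc⟩ := (coverMincard_finite_iff T _ U n).1 hlt
  refine ⟨s, hs, real_of_natCast_le_exp ?_⟩
  rw [← hc] at hn
  simpa using hn

/-- cylinder entourages -/
def UM (M : ℕ) (ε : ℝ) : SetRel (ℤ → ℂ) (ℤ → ℂ) :=
  {pq | ∀ i : ℤ, |i| ≤ M → dist (pq.1 i) (pq.2 i) < ε}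

instance (M : ℕ) (ε : ℝ) : (UM M ε).IsSymm := ⟨fun p q h i hi => by
  rw [dist_comm]; exact h i hi⟩

lemma exists_UM {U : SetRel (ℤ → ℂ) (ℤ → ℂ)} (hU : U ∈ 𝓤 (ℤ → ℂ)) :
    ∃ (M : ℕ) (ε : ℝ), 0 < ε ∧ SetRel.comp (UM M ε) (UM M ε) ⊆ U := by
  have hbas := Filter.HasBasis.iInf' (fun i : ℤ =>
    (Metric.uniformity_basis_dist (α := ℂ)).comap
      (fun a : (ℤ → ℂ) × (ℤ → ℂ) => (a.1 i, a.2 i)))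
  rw [Pi.uniformity, hbas.mem_iff] at hU
  obtain ⟨⟨I, r⟩, ⟨hI, hr⟩, hsub⟩ := hU
  obtain ⟨ε, hε, hεr⟩ : ∃ ε : ℝ, 0 < ε ∧ ∀ i ∈ I, ε ≤ r i := by
    have h' : ∀ i ∈ hI.toFinset, 0 < r i := fun i hi => hr i (by simpa using hi)
    have : ∃ ε : ℝ, 0 < ε ∧ ∀ i ∈ hI.toFinset, ε ≤ r i := by
      generalize hI.toFinset = J at h'
      induction J using Finset.induction_on with
      | empty => exact ⟨1, one_pos, by simp⟩
      | insert a s ha ih =>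
        obtain ⟨e, he, h⟩ := ih (fun i hi => h' i (Finset.mem_insert_of_mem hi))
        refine ⟨min e (r a), lt_min he (h' a (Finset.mem_insert_self _ _)), fun i hi => ?_⟩
        rcases Finset.mem_insert.1 hi with rfl | hi
        · exact min_le_right _ _
        · exact (min_le_left _ _).trans (h i hi)
    obtain ⟨e, he, h⟩ := this
    exact ⟨e, he, fun i hi => h i (by simpa using hi)⟩
  refine ⟨hI.toFinset.sup Int.natAbs, ε / 2, by positivity, ?_⟩
  rintro ⟨p, q⟩ ⟨w, h1, h2⟩
  apply hsub
  simp only [Set.mem_iInter]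
  intro i hi
  have hiM : |i| ≤ ((hI.toFinset.sup Int.natAbs : ℕ) : ℤ) := by
    rw [Int.abs_eq_natAbs]
    exact_mod_cast Finset.le_sup (f := Int.natAbs) (by simpa using hi)
  have a1 := h1 i hiM
  have a2 := h2 i hiM
  have a3 := dist_triangle (p i) (w i) (q i)
  have a4 := hεr i hi
  show dist (p i) (q i) < r i
  simp only at a1 a2
  linarith

/-- the shift -/
def sh : (ℤ → ℂ) ≃ₜ (ℤ → ℂ) where
  toFun p i := p (i + 1)
  invFun p i := p (i - 1)
  left_inv p := by ext i; simp
  right_inv p := by ext i; simp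
  continuous_toFun := by fun_prop
  continuous_invFun := by fun_prop

lemma sh_iter (k : ℕ) (p : ℤ → ℂ) (i : ℤ) : (sh^[k] p) i = p (i + k) := by
  induction k generalizing p with
  | zero => simp
  | succ k ih =>
    rw [Function.iterate_succ_apply, ih]
    show p (i + k + 1) = _
    push_cast; ring_nf

lemma mem_dyn {M n : ℕ} {ε : ℝ} {p q : ℤ → ℂ}
    (h : ∀ t : ℕ, t < n + 2 * M → dist (p (t - M)) (q (t - M)) < ε) :
    (p, q) ∈ dynEntourage sh (UM M ε) n := by
  rw [mem_dynEntourage]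
  intro k hk i hi
  simp only [sh_iter]
  rw [abs_le] at hi
  have := h (i + k + M).toNat (by omega)
  rw [Int.toNat_of_nonneg (by omega)] at this
  simpa using this

/-- the model words -/
noncomputable def word {X : Type} (T : X → X) (f : X → ℂ) (M : ℕ)
    (c : (X × ℂ) × (X × ℂ) × ℕ) : ℤ → ℂ := fun i =>
  if (i + M).toNat < c.2.2 then c.1.2 * f (T^[(i + M).toNat] c.1.1)
  else c.2.1.2 * f (T^[(i + M).toNat - c.2.2] c.2.1.1)

lemma exists_block (b : ℕ → ℕ) (b0 : b 0 = 0) (hb : StrictMono b) (n : ℕ) :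
    ∃ k, b k ≤ n ∧ n < b (k + 1) := by
  have h : ∃ k, n < b k := ⟨n + 1, (Nat.lt_succ_self n).trans_le (hb.id_le (n + 1))⟩
  classical
  have h0 : Nat.find h ≠ 0 := fun h0 => by
    have := Nat.find_spec h
    rw [h0, b0] at this; omega
  obtain ⟨k, hk⟩ := Nat.exists_eq_succ_of_ne_zero h0
  refine ⟨k, ?_, ?_⟩
  · have := Nat.find_min h (m := k) (by omega)
    omega
  · have := Nat.find_spec h
    rwa [hk] at this

lemma high_cover {X : Type} (T : X → X) (f : X → ℂ) (P : Finset ℂ) (hP : ∀ e ∈ P, ‖e‖ ≤ 1)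
    (b : ℕ → ℕ) (b0 : b 0 = 0) (hb : StrictMono b)
    (xs : ℕ → X) (e : ℕ → ℂ) (he : ∀ k, e k ∈ P) (y : ℤ → ℂ)
    (hy : ∀ k n : ℕ, b k ≤ n → n < b (k + 1) → y n = e k * f (T^[n - b k] (xs k)))
    (M n : ℕ) (ε : ℝ) (V : SetRel X X) (hV : ∀ u v, (u, v) ∈ V → dist (f u) (f v) < ε)
    (E : ℕ) (hE : ∀ k, E ≤ b (k + 1) → n + 2 * M ≤ b (k + 2) - b (k + 1))
    (s : Finset X) (hs : IsDynCoverOf T Set.univ V (n + 2 * M) s) :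
    ∃ t : Finset (ℤ → ℂ),
      IsDynCoverOf sh {p | ∃ m : ℤ, (E : ℤ) + M ≤ m ∧ p = fun i => y (m + i)} (UM M ε) n t ∧
      t.card ≤ s.card ^ 2 * P.card ^ 2 * (n + 2 * M + 1) := by
  classical
  refine ⟨((s ×ˢ P) ×ˢ (s ×ˢ P) ×ˢ Finset.range (n + 2 * M + 1)).image (word T f M), ?_, ?_⟩
  · rintro p ⟨m, hm, rfl⟩
    obtain ⟨a, rfl⟩ : ∃ a : ℕ, m = a + M := ⟨(m - M).toNat, by omega⟩
    obtain ⟨k, hk1, hk2⟩ := exists_block b b0 hb a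
    obtain ⟨u, hu, hu'⟩ := hs (Set.mem_univ (T^[a - b k] (xs k)))
    obtain ⟨v, hv, hv'⟩ := hs (Set.mem_univ (xs (k + 1)))
    have hgap := hE k (by omega)
    have key : ∀ z w : X, (z, w) ∈ dynEntourage T V (n + 2 * M) → ∀ k c, k < n + 2 * M → c ∈ P →
        dist (c * f (T^[k] z)) (c * f (T^[k] w)) < ε := by
      intro z w hzw k c hk hc
      have h1 := hV _ _ (mem_dynEntourage.1 hzw k hk)
      rw [dist_eq_norm, ← mul_sub, norm_mul, ← dist_eq_norm]
      have := hP c hc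
      have h0 := dist_nonneg (x := f (T^[k] z)) (y := f (T^[k] w))
      nlinarith
    refine ⟨word T f M ((u, e k), (v, e (k + 1)), min (b (k + 1) - a) (n + 2 * M)), ?_, ?_⟩
    · simp only [Finset.coe_image, Set.mem_image, Finset.mem_coe]
      refine ⟨_, ?_, rfl⟩
      simp only [Finset.mem_product, Finset.mem_range]
      refine ⟨⟨hu, he k⟩, ⟨hv, he _⟩, ?_⟩
      have := min_le_right (b (k + 1) - a) (n + 2 * M)
      omega
    · refine mem_dyn fun t ht => ?_
      have e1 : ((a : ℤ) + M + (t - M)) = ((a + t : ℕ) : ℤ) := by push_cast; ring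
      have e2 : ((t : ℤ) - M + M).toNat = t := by omega
      simp only [word, e1, e2]
      split_ifs with hlt
      · rw [lt_min_iff] at hlt
        rw [hy k (a + t) (by omega) (by omega)]
        have : a + t - b k = t + (a - b k) := by omega
        rw [this, Function.iterate_add_apply]
        exact key _ _ hu' t _ ht (he k)
      · have hlt' : b (k + 1) - a ≤ t := by
          rw [lt_min_iff] at hlt
          by_contra hcon
          exact hlt ⟨by omega, ht⟩
        have hmin : min (b (k + 1) - a) (n + 2 * M) = b (k + 1) - a := min_eq_left (by omega)
        rw [hy (k + 1) (a + t) (by omega) (by show a + t < b (k + 2); omega), hmin]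
        have : a + t - b (k + 1) = t - (b (k + 1) - a) := by omega
        rw [this]
        exact key _ _ hv' _ _ (by omega) (he _)
  · refine Finset.card_image_le.trans ?_
    simp only [Finset.card_product, Finset.card_range]
    apply le_of_eq; ring

lemma low_cover (y : ℤ → ℂ) (hyneg : ∀ n : ℤ, n < 0 → y n = 0) (M n : ℕ) (ε : ℝ) (hε : 0 < ε)
    (B : ℕ) : ∃ t : Finset (ℤ → ℂ),
      IsDynCoverOf sh {p | ∃ m : ℤ, m < B ∧ p = fun i => y (m + i)} (UM M ε) n t ∧
      t.card ≤ n + (M + B + 1) := by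
  classical
  refine ⟨insert 0 ((Finset.Ico (-(n + M : ℤ)) B).image fun m i => y (m + i)), ?_, ?_⟩
  · rintro p ⟨m, hm, rfl⟩
    by_cases h : -(n + M : ℤ) ≤ m
    · refine ⟨fun i => y (m + i), ?_, mem_dyn fun t _ => ?_⟩
      · rw [Finset.mem_coe]
        exact Finset.mem_insert_of_mem (Finset.mem_image.2 ⟨m, Finset.mem_Ico.2 ⟨h, hm⟩, rfl⟩)
      · simpa using hε
    · refine ⟨0, by simp, mem_dyn fun t ht => ?_⟩
      rw [hyneg _ (by omega)]
      simpa using hε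
  · refine (Finset.card_insert_le _ _).trans ?_
    refine (Nat.add_le_add_right Finset.card_image_le 1).trans ?_
    simp only [Int.card_Ico]
    omega

/-- The orbit of the concatenated sequence. -/
def orb (y : ℤ → ℂ) : Set (ℤ → ℂ) := {p | ∃ m : ℤ, p = fun i => y (m + i)}

theorem entropy_orb {X : Type} [MetricSpace X] [CompactSpace X] (T : X ≃ₜ X) (hT : coverEntropy T Set.univ = 0) (f : C(X, ℂ))
    (P : Finset ℂ) (hP : ∀ e ∈ P, ‖e‖ ≤ 1)
    (b : ℕ → ℕ) (b0 : b 0 = 0) (hb : StrictMono b)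
    (hgap : Tendsto (fun k : ℕ => b (k + 1) - b k) atTop atTop)
    (xs : ℕ → X) (e : ℕ → ℂ) (he : ∀ k, e k ∈ P) (y : ℤ → ℂ)
    (hyneg : ∀ n : ℤ, n < 0 → y n = 0)
    (hy : ∀ k n : ℕ, b k ≤ n → n < b (k + 1) → y n = e k * f (T^[n - b k] (xs k))) :
    coverEntropy sh (orb y) ≤ 0 := by
  rw [coverEntropy]
  refine iSup₂_le fun U hU => ?_
  obtain ⟨M, ε, hε, hsub⟩ := exists_UM hU
  refine (coverEntropyEntourage_antitone _ _ hsub).trans ?_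
  have hfu : UniformContinuous f := CompactSpace.uniformContinuous_of_continuous f.continuous
  obtain ⟨V, hV𝓤, hV⟩ : ∃ V ∈ 𝓤 X, ∀ u v, (u, v) ∈ V → dist (f u) (f v) < ε :=
    ⟨_, hfu (Metric.dist_mem_uniformity hε), fun u v h => h⟩
  refine le_zero_of_forall_pos fun δ hδ => ?_
  -- choose the time
  have h1 := exists_cover T hT hV𝓤 (δ / 4) (by positivity)
  have h2 := lin_le_exp (δ * M) ((P.card : ℝ) ^ 2) ((P.card : ℝ) ^ 2 * (2 * M + 1)) (δ / 2)
    (by positivity)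
  obtain ⟨n, ⟨s, hs, hsc⟩, hn2, hn0⟩ := (((tendsto_add_atTop_nat (2 * M)).eventually h1).and
    (h2.and (eventually_gt_atTop 0))).exists
  obtain ⟨k0, hk0⟩ := eventually_atTop.1 (hgap.eventually_ge_atTop (n + 2 * M))
  obtain ⟨t, ht, htc⟩ := high_cover T f P hP b b0 hb xs e he y hy M n ε V hV (b k0)
    (fun k hk => hk0 (k + 1) (hb.le_iff_le.1 hk)) s hs
  have hF : orb y = {p | ∃ m : ℤ, m < ((b k0 + M : ℕ) : ℤ) ∧ p = fun i => y (m + i)} ∪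
      {p | ∃ m : ℤ, (b k0 : ℤ) + M ≤ m ∧ p = fun i => y (m + i)} := by
    ext p
    constructor
    · rintro ⟨m, rfl⟩
      by_cases h : m < ((b k0 + M : ℕ) : ℤ)
      · exact Or.inl ⟨m, h, rfl⟩
      · exact Or.inr ⟨m, by push_cast at h; omega, rfl⟩
    · rintro (⟨m, -, h⟩ | ⟨m, -, h⟩) <;> exact ⟨m, h⟩
  simp only [hF, coverEntropyEntourage_union]
  refine max_le ?_ ?_
  · refine le_trans (coverEntropyEntourage_antitone _ _ (?_ : UM M ε ⊆ _)) ?_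
    · rintro ⟨p, q⟩ h
      exact ⟨p, fun i _ => by simpa using hε, h⟩
    · refine (entourage_le_zero_of_linear sh _ _ (M + (b k0 + M) + 1) fun n =>
        low_cover y hyneg M n ε hε (b k0 + M)).trans (by exact_mod_cast hδ.le)
  · have hinv : Set.MapsTo sh {p | ∃ m : ℤ, (b k0 : ℤ) + M ≤ m ∧ p = fun i => y (m + i)}
        {p | ∃ m : ℤ, (b k0 : ℤ) + M ≤ m ∧ p = fun i => y (m + i)} := by
      rintro p ⟨m, hm, rfl⟩
      refine ⟨m + 1, by omega, ?_⟩
      ext i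
      show y (m + (i + 1)) = y (m + 1 + i)
      ring_nf
    refine entourage_le_of_inv sh _ _ hinv δ n hn0.ne' t ht ?_
    have hc : (t.card : ℝ) ≤ (s.card : ℝ) ^ 2 * (P.card : ℝ) ^ 2 * (n + 2 * M + 1) := by
      exact_mod_cast htc
    have hs2 : (s.card : ℝ) ^ 2 ≤ Real.exp (δ / 4 * ((n + 2 * M : ℕ) : ℝ)) ^ 2 := by
      gcongr
    refine hc.trans ?_
    calc (s.card : ℝ) ^ 2 * (P.card : ℝ) ^ 2 * (n + 2 * M + 1)
        ≤ Real.exp (δ / 4 * ((n + 2 * M : ℕ) : ℝ)) ^ 2 * (P.card : ℝ) ^ 2 * (n + 2 * M + 1) := by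
          gcongr
      _ = Real.exp (δ / 2 * n) *
          (((P.card : ℝ) ^ 2 * n + (P.card : ℝ) ^ 2 * (2 * M + 1)) * Real.exp (δ * M)) := by
          rw [← Real.exp_nat_mul]
          have : ((2 : ℕ) : ℝ) * (δ / 4 * ((n + 2 * M : ℕ) : ℝ)) = δ / 2 * n + δ * M := by
            push_cast; ring
          rw [this, Real.exp_add]; ring
      _ ≤ Real.exp (δ / 2 * n) * Real.exp (δ / 2 * n) := by gcongr
      _ = Real.exp (δ * n) := by rw [← Real.exp_add]; ring_nf

lemma phases (z : ℂ) : ∃ e ∈ ({1, -1, Complex.I, -Complex.I} : Finset ℂ),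
    ‖z‖ ≤ 2 * (e * z).re := by
  have h := Complex.norm_le_abs_re_add_abs_im z
  rcases le_total |z.re| |z.im| with h1 | h1
  · rcases le_total 0 z.im with h2 | h2
    · refine ⟨-Complex.I, by simp, ?_⟩
      simp [abs_of_nonneg h2] at *
      linarith
    · refine ⟨Complex.I, by simp, ?_⟩
      simp [abs_of_nonpos h2] at *
      linarith
  · rcases le_total 0 z.re with h2 | h2
    · refine ⟨1, by simp, ?_⟩
      simp [abs_of_nonneg h2] at *
      linarith
    · refine ⟨-1, by simp, ?_⟩
      simp [abs_of_nonpos h2] at *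
      linarith

lemma norm_moebius_le (n : ℕ) : ‖((ArithmeticFunction.moebius n : ℤ) : ℂ)‖ ≤ 1 := by
  rw [Complex.norm_intCast]
  exact_mod_cast ArithmeticFunction.abs_moebius_le_one

lemma sum_blocks (b : ℕ → ℕ) (b0 : b 0 = 0) (hb : StrictMono b) (g : ℕ → ℂ) (K : ℕ) :
    ∑ k ∈ Finset.range K, ∑ n ∈ Finset.Ico (b k) (b (k + 1)), g n =
      ∑ n ∈ Finset.Ico 0 (b K), g n := by
  induction K with
  | zero => simp [b0]
  | succ K ih =>
    rw [Finset.sum_range_succ, ih,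
      Finset.sum_Ico_consecutive _ (Nat.zero_le _) (hb (Nat.lt_succ_self K)).le]

lemma sum_Icc_eq (g : ℕ → ℂ) (g0 : g 0 = 0) (N : ℕ) :
    ∑ n ∈ Finset.Icc 1 N, g n = ∑ n ∈ Finset.Ico 0 (N + 1), g n := by
  have : Finset.Icc 1 N = Finset.Ico 1 (N + 1) := by ext; simp [Nat.lt_succ_iff]
  rw [this, Finset.sum_eq_sum_Ico_succ_bot (Nat.succ_pos N), g0, zero_add]

lemma sh_preimage_orb (y : ℤ → ℂ) : sh ⁻¹' (orb y) = orb y := by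
  ext p
  constructor
  · rintro ⟨m, hm⟩
    refine ⟨m - 1, ?_⟩
    ext i
    have h : p (i - 1 + 1) = y (m + (i - 1)) := congrFun hm (i - 1)
    rw [sub_add_cancel] at h
    rw [h]; ring_nf
  · rintro ⟨m, rfl⟩
    refine ⟨m + 1, ?_⟩
    ext i
    show y (m + (i + 1)) = _
    ring_nf

/-- Sarnak's conjecture applied to an orbit closure in the shift space. -/
lemma sarnak_seq (H : ∀ (X : Type) [MetricSpace X] [CompactSpace X] (T : X ≃ₜ X),
        Dynamics.coverEntropy (⇑T) Set.univ = 0 → MobiusOrthogonal T)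
    (y : ℤ → ℂ) (C : ℝ) (hC : ∀ n, ‖y n‖ ≤ C) (hent : coverEntropy sh (orb y) ≤ 0) :
    Tendsto (fun N : ℕ => (1 / (N : ℂ)) *
        ∑ n ∈ Finset.Icc 1 N, y n * (ArithmeticFunction.moebius n : ℂ)) atTop (nhds 0) := by
  have hiff : ∀ p, p ∈ closure (orb y) ↔ sh p ∈ closure (orb y) := by
    intro p
    rw [← Set.mem_preimage (f := sh), sh.preimage_closure, sh_preimage_orb]
  have hmaps : Set.MapsTo sh (closure (orb y)) (closure (orb y)) := fun p hp => (hiff p).1 hp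
  have hcomp : IsCompact (closure (orb y)) := by
    have hK : IsCompact (Set.pi Set.univ fun _ : ℤ => Metric.closedBall (0 : ℂ) C) :=
      isCompact_univ_pi fun _ => isCompact_closedBall _ _
    refine hK.of_isClosed_subset isClosed_closure (closure_minimal ?_ hK.isClosed)
    rintro p ⟨m, rfl⟩ i -
    simpa using hC (m + i)
  have hy0 : y ∈ orb y := ⟨0, by simp⟩
  let S : closure (orb y) ≃ₜ closure (orb y) := sh.subtype hiff
  have hS : coverEntropy S Set.univ = 0 := by
    have h1 : coverEntropy (hmaps.restrict sh _ _) Set.univ = coverEntropy sh (closure (orb y)) :=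
      coverEntropy_restrict hmaps
    have h2 : coverEntropy sh (closure (orb y)) = coverEntropy sh (orb y) :=
      coverEntropy_closure sh.continuous
    have h3 : coverEntropy S Set.univ = coverEntropy sh (orb y) := h1.trans h2
    rw [h3]
    exact le_antisymm hent (coverEntropy_nonneg _ ⟨y, hy0⟩)
  have hcs : CompactSpace (closure (orb y)) := isCompact_iff_compactSpace.1 hcomp
  let _ : MetricSpace (closure (orb y)) := UniformSpace.metricSpace _
  have key := H (closure (orb y)) S hS ⟨fun p => p.1 0, (continuous_apply (0 : ℤ)).comp continuous_subtype_val⟩ ⟨y, subset_closure hy0⟩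
  refine key.congr fun N => ?_
  congr 1
  refine Finset.sum_congr rfl fun n _ => ?_
  congr 1
  have hit : ∀ n : ℕ, ∀ p : closure (orb y), ((S^[n] p : closure (orb y)) : ℤ → ℂ) = sh^[n] p := by
    intro n
    induction n with
    | zero => intro p; rfl
    | succ n ih => intro p; rw [Function.iterate_succ_apply, Function.iterate_succ_apply, ih]; rfl
  show ((S^[n] ⟨y, subset_closure hy0⟩ : closure (orb y)) : ℤ → ℂ) 0 = y n
  rw [hit, sh_iter]
  simp

theorem strong_of_sarnak (H : ∀ (X : Type) [MetricSpace X] [CompactSpace X] (T : X ≃ₜ X),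
        Dynamics.coverEntropy (⇑T) Set.univ = 0 → MobiusOrthogonal T)
    (X : Type) [MetricSpace X] [CompactSpace X] (T : X ≃ₜ X)
    (hT : Dynamics.coverEntropy (⇑T) Set.univ = 0) : StrongMOMO T := by
  intro b b0 hb hgap xs f
  choose e he hS using fun k => phases (∑ n ∈ Finset.Ico (b k) (b (k + 1)),
    f ((⇑T)^[n - b k] (xs k)) * (ArithmeticFunction.moebius n : ℂ))
  choose kk hk1 hk2 using exists_block b b0 hb
  have hP : ∀ c ∈ ({1, -1, Complex.I, -Complex.I} : Finset ℂ), ‖c‖ ≤ 1 := by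
    intro c hc
    simp only [Finset.mem_insert, Finset.mem_singleton] at hc
    rcases hc with rfl | rfl | rfl | rfl <;> simp
  obtain ⟨y, hyneg, hy⟩ : ∃ y : ℤ → ℂ, (∀ n : ℤ, n < 0 → y n = 0) ∧
      (∀ k n : ℕ, b k ≤ n → n < b (k + 1) → y n = e k * f (T^[n - b k] (xs k))) := by
    refine ⟨fun n => if n < 0 then 0 else
      e (kk n.toNat) * f (T^[n.toNat - b (kk n.toNat)] (xs (kk n.toNat))),
      fun n hn => if_pos hn, fun k n h1 h2 => ?_⟩
    have hkk : kk n = k := by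
      have a1 := hb.lt_iff_lt.1 ((hk1 n).trans_lt h2)
      have a2 := hb.lt_iff_lt.1 (h1.trans_lt (hk2 n))
      omega
    simp [hkk]
  have hC : ∀ n, ‖y n‖ ≤ ‖f‖ := by
    intro n
    rcases lt_or_ge n 0 with h | h
    · rw [hyneg n h]; simp
    · obtain ⟨n, rfl⟩ := Int.eq_ofNat_of_zero_le h
      rw [hy (kk n) n (hk1 n) (hk2 n), norm_mul]
      have h1 := hP _ (he (kk n))
      have h2 := f.norm_coe_le_norm (T^[n - b (kk n)] (xs (kk n)))
      have h3 := norm_nonneg (f (T^[n - b (kk n)] (xs (kk n))))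
      nlinarith
  have hent := entropy_orb T hT f _ hP b b0 hb hgap xs e he y hyneg hy
  have key := sarnak_seq H y ‖f‖ hC hent
  have hbt : Tendsto (fun K => b K - 1) atTop atTop :=
    (tendsto_sub_atTop_nat 1).comp hb.tendsto_atTop
  have key2 := ((key.comp hbt).norm).const_mul 2
  rw [norm_zero, mul_zero] at key2
  refine squeeze_zero' (Eventually.of_forall fun K => by positivity) ?_ key2
  filter_upwards [hb.tendsto_atTop.eventually_ge_atTop 2] with K hK
  have hsum : ∑ k ∈ Finset.range K, ‖∑ n ∈ Finset.Ico (b k) (b (k + 1)),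
      f ((⇑T)^[n - b k] (xs k)) * (ArithmeticFunction.moebius n : ℂ)‖ ≤
      2 * ‖∑ n ∈ Finset.Icc 1 (b K - 1), y n * (ArithmeticFunction.moebius n : ℂ)‖ := by
    rw [sum_Icc_eq (fun n : ℕ => y n * (ArithmeticFunction.moebius n : ℂ)) (by simp),
      Nat.sub_add_cancel (by omega), ← sum_blocks b b0 hb]
    refine (Finset.sum_le_sum fun k _ => hS k).trans ?_
    rw [← Finset.mul_sum]
    refine mul_le_mul_of_nonneg_left ?_ (by norm_num)
    refine le_trans (le_of_eq ?_) (Complex.re_le_norm _)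
    rw [Complex.re_sum]
    refine Finset.sum_congr rfl fun k _ => ?_
    congr 1
    rw [Finset.mul_sum]
    refine Finset.sum_congr rfl fun n hn => ?_
    rw [Finset.mem_Ico] at hn
    rw [hy k n hn.1 hn.2, mul_assoc]
  simp only [Function.comp, norm_mul, norm_div, norm_one, Complex.norm_natCast]
  have hpos : (0 : ℝ) < ((b K - 1 : ℕ) : ℝ) := by
    exact_mod_cast (by omega : 0 < b K - 1)
  have hle : ((b K - 1 : ℕ) : ℝ) ≤ b K := by exact_mod_cast Nat.sub_le _ _
  calc _ ≤ 1 / (b K : ℝ) * (2 * ‖∑ n ∈ Finset.Icc 1 (b K - 1),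
          y n * (ArithmeticFunction.moebius n : ℂ)‖) := by gcongr
    _ ≤ 1 / ((b K - 1 : ℕ) : ℝ) * (2 * ‖∑ n ∈ Finset.Icc 1 (b K - 1),
          y n * (ArithmeticFunction.moebius n : ℂ)‖) := by gcongr
    _ = _ := by ring

theorem uniform_of_strong {X : Type} [MetricSpace X] [CompactSpace X] (T : X ≃ₜ X)
    (h : StrongMOMO T) : UniformlyMobiusOrthogonal T := by
  intro f
  rw [Metric.tendstoUniformly_iff]
  by_contra hcon
  push Not at hcon
  obtain ⟨ε, hε, hfr⟩ := hcon
  rw [frequently_atTop] at hfr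
  choose N hN hx using hfr
  choose x hx using hx
  set C := ‖f‖ with hCdef
  have hC0 : 0 ≤ C := norm_nonneg _
  obtain ⟨R, hR⟩ : ∃ R : ℕ → ℕ, ∀ c : ℕ, R c = 2 * c + ⌈2 * (c : ℝ) * C / ε⌉₊ + 1 :=
    ⟨_, fun c => rfl⟩
  obtain ⟨b, b0, bs⟩ : ∃ b : ℕ → ℕ, b 0 = 0 ∧ ∀ k, b (k + 1) = N (R (b k)) + 1 :=
    ⟨fun k => Nat.rec 0 (fun _ c => N (R c) + 1) k, rfl, fun k => rfl⟩
  have hbR : ∀ k, 2 * b k + 2 ≤ b (k + 1) := by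
    intro k
    have h1 := hN (R (b k))
    have h2 := hR (b k)
    rw [bs]; omega
  have hb : StrictMono b := strictMono_nat_of_lt_succ fun k => by have := hbR k; omega
  have hgap : Tendsto (fun k : ℕ => b (k + 1) - b k) atTop atTop := by
    refine tendsto_atTop_mono (fun k => ?_) tendsto_id
    have := hbR k
    have h2 : k ≤ b k := hb.id_le k
    simp only [id]; omega
  have key := (h b b0 hb hgap (fun k => T^[b k] (x (R (b k)))) f).comp (tendsto_add_atTop_nat 1)
  obtain ⟨K, hK⟩ := (key.eventually (gt_mem_nhds (show (0 : ℝ) < ε / 4 by positivity))).exists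
  simp only [Function.comp] at hK
  rw [Finset.sum_range_succ] at hK
  have hblock : ∑ n ∈ Finset.Ico (b K) (b (K + 1)),
        f (T^[n - b K] (T^[b K] (x (R (b K))))) * (ArithmeticFunction.moebius n : ℂ) =
      ∑ n ∈ Finset.Ico (b K) (b (K + 1)),
        f (T^[n] (x (R (b K)))) * (ArithmeticFunction.moebius n : ℂ) := by
    refine Finset.sum_congr rfl fun n hn => ?_
    rw [Finset.mem_Ico] at hn
    rw [← Function.iterate_add_apply, Nat.sub_add_cancel hn.1]
  rw [hblock] at hK
  have hxK := hx (R (b K))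
  have hNK := hN (R (b K))
  have hRK := hR (b K)
  have hbK := bs K
  set n1 := N (R (b K)) with hn1
  have hn1pos : (1 : ℝ) ≤ n1 := by exact_mod_cast (by omega : 1 ≤ n1)
  have hn1C : 2 * b K * C ≤ ε * n1 := by
    have h1 : 2 * b K * C / ε ≤ n1 :=
      (Nat.le_ceil _).trans (by exact_mod_cast (by omega : ⌈2 * (b K : ℝ) * C / ε⌉₊ ≤ n1))
    rw [div_le_iff₀ hε] at h1
    linarith
  rw [dist_zero_left, norm_mul, norm_div, norm_one, Complex.norm_natCast,
    sum_Icc_eq (fun n => f (T^[n] (x (R (b K)))) * (ArithmeticFunction.moebius n : ℂ)) (by simp),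
    ← hbK, ← Finset.sum_Ico_consecutive _ (Nat.zero_le (b K)) (hb (Nat.lt_succ_self K)).le,
    one_div, inv_mul_eq_div, le_div_iff₀ (by linarith)] at hxK
  have hsmall : ‖∑ n ∈ Finset.Ico 0 (b K),
      f (T^[n] (x (R (b K)))) * (ArithmeticFunction.moebius n : ℂ)‖ ≤ b K * C := by
    refine (norm_sum_le_of_le (f := fun n : ℕ =>
      f (T^[n] (x (R (b K)))) * (ArithmeticFunction.moebius n : ℂ)) _
      (n := fun _ => C) fun n _ => ?_).trans (by simp)
    rw [norm_mul]
    have h1 := norm_moebius_le n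
    have h2 := f.norm_coe_le_norm (T^[n] (x (R (b K))))
    have h3 := norm_nonneg (f (T^[n] (x (R (b K)))))
    nlinarith
  have htri := hxK.trans (norm_add_le _ _)
  have hb1 : (b (K + 1) : ℝ) = n1 + 1 := by rw [hbK]; push_cast; rfl
  rw [one_div, inv_mul_eq_div, div_lt_iff₀ (by rw [hb1]; linarith), hb1] at hK
  have hnn : 0 ≤ ∑ k ∈ Finset.range K, ‖∑ n ∈ Finset.Ico (b k) (b (k + 1)),
      f (T^[n - b k] (T^[b k] (x (R (b k))))) * (ArithmeticFunction.moebius n : ℂ)‖ := by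
    positivity
  nlinarith

end MomoAux

/-- The following are equivalent: (i) every zero entropy system is Möbius orthogonal
(Sarnak's conjecture); (ii) every zero entropy system is uniformly Möbius orthogonal;
(iii) every zero entropy system satisfies the strong MOMO property. -/
theorem sarnak_uniform_sarnak_strong_MOMO_equivalent :
    ((∀ (X : Type) [MetricSpace X] [CompactSpace X] (T : X ≃ₜ X),
        Dynamics.coverEntropy (⇑T) Set.univ = 0 → MobiusOrthogonal T) ↔
      (∀ (X : Type) [MetricSpace X] [CompactSpace X] (T : X ≃ₜ X),
        Dynamics.coverEntropy (⇑T) Set.univ = 0 → UniformlyMobiusOrthogonal T)) ∧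
    ((∀ (X : Type) [MetricSpace X] [CompactSpace X] (T : X ≃ₜ X),
        Dynamics.coverEntropy (⇑T) Set.univ = 0 → UniformlyMobiusOrthogonal T) ↔
      (∀ (X : Type) [MetricSpace X] [CompactSpace X] (T : X ≃ₜ X),
        Dynamics.coverEntropy (⇑T) Set.univ = 0 → StrongMOMO T)) := by
  have h13 := MomoAux.strong_of_sarnak
  have h32 : (∀ (X : Type) [MetricSpace X] [CompactSpace X] (T : X ≃ₜ X),
        Dynamics.coverEntropy (⇑T) Set.univ = 0 → StrongMOMO T) →
      (∀ (X : Type) [MetricSpace X] [CompactSpace X] (T : X ≃ₜ X),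
        Dynamics.coverEntropy (⇑T) Set.univ = 0 → UniformlyMobiusOrthogonal T) :=
    fun H X _ _ T hT => MomoAux.uniform_of_strong T (H X T hT)
  have h21 : (∀ (X : Type) [MetricSpace X] [CompactSpace X] (T : X ≃ₜ X),
        Dynamics.coverEntropy (⇑T) Set.univ = 0 → UniformlyMobiusOrthogonal T) →
      (∀ (X : Type) [MetricSpace X] [CompactSpace X] (T : X ≃ₜ X),
        Dynamics.coverEntropy (⇑T) Set.univ = 0 → MobiusOrthogonal T) :=
    fun H X _ _ T hT f x => (H X T hT f).tendsto_at x
  exact ⟨⟨fun H => h32 (h13 H), h21⟩, ⟨fun H => h13 (h21 H), h32⟩⟩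
end

section
/- Let A ⊂ ℂ be a finite set and let x ∈ A^ℤ be Weyl rationally almost periodic, i.e., for every ε > 0 there exists a periodic sequence y ∈ A^ℤ with d_W(x,y) < ε, where d_W(x,y) = limsup_{N→∞} sup_{ℓ ∈ ℤ} (1/N)|{ℓ ≤ n < ℓ+N : x(n) ≠ y(n)}|. Let X_x ⊆ A^ℤ be the orbit closure of x under the left shift S. Then for every bounded aperiodic sequence u : ℕ → ℂ, every continuous f : X_x → ℂ, and every z ∈ X_x, lim_{N→∞} (1/N) Σ_{n≤N} f(S^n z) u(n) = 0. -/
open Filter Topology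

/-- The left shift on a two-sided sequence space. -/
def shift {α : Type*} (x : ℤ → α) : ℤ → α := fun n => x (n + 1)

/-- The orbit closure of a point of a two-sided sequence space under the left shift
(the closure of the two-sided shift orbit). -/
def orbitClosure {α : Type*} [TopologicalSpace α] (x : ℤ → α) : Set (ℤ → α) :=
  closure (Set.range fun k : ℤ => fun n : ℤ => x (n + k))

/-- A sequence `y ∈ A^ℤ` is periodic if `S^q y = y` for some `q ≥ 1`. -/
def IsPeriodicSeq {α : Type*} (y : ℤ → α) : Prop :=
  ∃ q : ℕ, 1 ≤ q ∧ ∀ n : ℤ, y (n + q) = y n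

/-- The Weyl pseudo-metric distance between two points of `A^ℤ`:
`d_W(x,y) = limsup_N sup_ℓ (1/N) |{ℓ ≤ n < ℓ+N : x(n) ≠ y(n)}|`. -/
noncomputable def weylDist {α : Type*} (x y : ℤ → α) : ℝ :=
  Filter.limsup
    (fun N : ℕ => ⨆ ℓ : ℤ, (1 / N : ℝ) *
      ∑ n ∈ Finset.Ico ℓ (ℓ + N), Set.indicator {n : ℤ | x n ≠ y n} (fun _ => (1 : ℝ)) n)
    atTop

open Asymptotics in
lemma aux_periodic_sum (u : ℕ → ℂ) (Cu : ℝ) (hu : ∀ n : ℕ, ‖u n‖ ≤ Cu)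
    (haper : ∀ a b : ℕ, 1 ≤ a →
      Tendsto (fun M : ℕ => (1 / (M : ℂ)) * ∑ m ∈ Finset.Icc 1 M, u (a * m + b))
        atTop (nhds 0))
    (q : ℕ) (hq : 1 ≤ q) (H : ℕ → ℂ) (B : ℝ) (hB : ∀ n, ‖H n‖ ≤ B) :
    (fun N : ℕ => ∑ n ∈ Finset.Icc 1 N, H (n % q) * u n) =o[atTop] (fun N : ℕ => (N : ℂ)) := by
  have hCu : 0 ≤ Cu := (norm_nonneg _).trans (hu 0)
  have hB0 : 0 ≤ B := (norm_nonneg _).trans (hB 0)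
  have hterm : ∀ n, ‖H (n % q) * u n‖ ≤ B * Cu := fun n => by
    rw [norm_mul]; exact mul_le_mul (hB _) (hu _) (norm_nonneg _) hB0
  have hNat : Tendsto (fun N : ℕ => ‖(N : ℂ)‖) atTop atTop := by
    simpa using tendsto_natCast_atTop_atTop (R := ℝ)
  have hconst : ∀ (e : ℕ → ℂ) (K : ℝ), (∀ n, ‖e n‖ ≤ K) →
      e =o[atTop] (fun N : ℕ => (N : ℂ)) := by
    intro e K he
    have h1 : e =O[atTop] (fun _ : ℕ => (1 : ℝ)) :=
      IsBigO.of_bound K (Eventually.of_forall fun n => by simpa using he n)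
    exact h1.trans_isLittleO ((isLittleO_const_left).2 (Or.inr hNat))
  -- the arithmetic progression sums
  have hT : ∀ r : ℕ, (fun N : ℕ => ∑ m ∈ Finset.Icc 1 (N / q), u (q * m + r))
      =o[atTop] (fun N : ℕ => (N : ℂ)) := by
    intro r
    have h1 : (fun M : ℕ => ∑ m ∈ Finset.Icc 1 M, u (q * m + r))
        =o[atTop] (fun N : ℕ => (N : ℂ)) := by
      rw [isLittleO_iff_tendsto']
      · refine (haper q r hq).congr fun M => ?_
        ring
      · filter_upwards [eventually_ge_atTop 1] with M hM h0
        have : M = 0 := by exact_mod_cast h0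
        omega
    have h2 := h1.comp_tendsto (Nat.tendsto_div_const_atTop (n := q) (by omega))
    refine h2.trans_isBigO (IsBigO.of_bound 1 (Eventually.of_forall fun N => ?_))
    simp only [Function.comp, Complex.norm_natCast, one_mul]
    exact_mod_cast Nat.div_le_self N q
  have hblock : ∀ M : ℕ, ∑ n ∈ Finset.range (q * M), H (n % q) * u n
      = ∑ r ∈ Finset.range q, H r * ∑ m ∈ Finset.range M, u (q * m + r) := by
    intro M
    induction M with
    | zero => simp
    | succ M ih =>
      rw [Nat.mul_succ, Finset.sum_range_add, ih, ← Finset.sum_add_distrib]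
      refine Finset.sum_congr rfl fun r hr => ?_
      rw [Finset.sum_range_succ, mul_add, Nat.mul_add_mod,
        Nat.mod_eq_of_lt (Finset.mem_range.1 hr)]
  have hshift : ∀ (v : ℕ → ℂ) (M : ℕ),
      ∑ m ∈ Finset.range M, v m = v 0 - v M + ∑ m ∈ Finset.Icc 1 M, v m := by
    intro v M
    induction M with
    | zero => simp
    | succ M ih =>
      rw [Finset.sum_range_succ, ih, Finset.sum_Icc_succ_top (by omega)]; ring
  have hmain : ∀ N : ℕ, ∑ n ∈ Finset.Icc 1 N, H (n % q) * u n
      = (∑ r ∈ Finset.range q, H r * ∑ m ∈ Finset.Icc 1 (N / q), u (q * m + r))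
        + ((∑ r ∈ Finset.range q, H r * (u (q * 0 + r) - u (q * (N / q) + r)))
          + (∑ k ∈ Finset.range (N % q), H ((q * (N / q) + k) % q) * u (q * (N / q) + k))
          + H (N % q) * u N - H (0 % q) * u 0) := by
    intro N
    have e1 := hshift (fun n => H (n % q) * u n) N
    have e2 : ∑ n ∈ Finset.range N, H (n % q) * u n
        = ∑ n ∈ Finset.range (q * (N / q)), H (n % q) * u n
          + ∑ k ∈ Finset.range (N % q), H ((q * (N / q) + k) % q) * u (q * (N / q) + k) := by
      rw [← Finset.sum_range_add, Nat.div_add_mod]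
    rw [hblock] at e2
    have e3 : ∑ r ∈ Finset.range q, H r * ∑ m ∈ Finset.range (N / q), u (q * m + r)
       = (∑ r ∈ Finset.range q, H r * (u (q * 0 + r) - u (q * (N / q) + r)))
        + ∑ r ∈ Finset.range q, H r * ∑ m ∈ Finset.Icc 1 (N / q), u (q * m + r) := by
      rw [← Finset.sum_add_distrib]
      refine Finset.sum_congr rfl fun r hr => ?_
      rw [hshift (fun m => u (q * m + r))]; ring
    rw [e3] at e2
    linear_combination e2 - e1
  rw [show (fun N : ℕ => ∑ n ∈ Finset.Icc 1 N, H (n % q) * u n) = _ from funext hmain]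
  have hS := IsLittleO.sum (s := Finset.range q) fun r _ => (hT r).const_mul_left (H r)
  refine IsLittleO.add (hS.congr_left fun N => by simp only [Finset.sum_apply]) ?_
  refine hconst _ (q * (B * (Cu + Cu)) + q * (B * Cu) + B * Cu + B * Cu) fun N => ?_
  refine (norm_sub_le _ _).trans (add_le_add ((norm_add_le _ _).trans (add_le_add
    ((norm_add_le _ _).trans (add_le_add ?_ ?_)) (hterm _))) (hterm _))
  · refine (norm_sum_le _ _).trans ((Finset.sum_le_card_nsmul _ _ (B * (Cu + Cu)) ?_).trans ?_)
    · intro r _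
      rw [norm_mul]
      exact mul_le_mul (hB _) ((norm_sub_le _ _).trans (add_le_add (hu _) (hu _)))
        (norm_nonneg _) hB0
    · simp
  · refine (norm_sum_le _ _).trans ((Finset.sum_le_card_nsmul _ _ (B * Cu) ?_).trans ?_)
    · intro r _; exact hterm _
    · rw [Finset.card_range, nsmul_eq_mul]
      have : ((N % q : ℕ) : ℝ) ≤ q := by exact_mod_cast (Nat.mod_lt N (by omega)).le
      exact mul_le_mul_of_nonneg_right this (by positivity)

lemma aux_unif {α : Type*} [TopologicalSpace α] [T2Space α] (X : Set (ℤ → α)) [CompactSpace X]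
    (f : C(X, ℂ)) (ε : ℝ) (hε : 0 < ε) :
    ∃ L : ℕ, ∀ w w' : X, (∀ j ∈ Finset.Icc (-(L : ℤ)) L, w.1 j = w'.1 j) → ‖f w - f w'‖ < ε := by
  have hK : IsCompact {p : X × X | ε ≤ ‖f p.1 - f p.2‖} :=
    (isClosed_le continuous_const (by fun_prop)).isCompact
  have key := hK.elim_directed_family_closed
    (fun L : ℕ => {p : X × X | ∀ j ∈ Finset.Icc (-(L : ℤ)) L, p.1.1 j = p.2.1 j})
  refine Exists.elim (key ?_ ?_ ?_) ?_
  rotate_left 3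
  · intro L hL
    refine ⟨L, fun w w' h => ?_⟩
    by_contra hc
    have : (w, w') ∈ (∅ : Set (X × X)) := by
      rw [← hL]; exact ⟨not_lt.1 hc, h⟩
    exact this
  · intro L
    simp only [Set.ofPred_forall]
    refine isClosed_iInter fun j => isClosed_iInter fun _ => ?_
    exact isClosed_eq ((continuous_apply j).comp (continuous_subtype_val.comp continuous_fst))
      ((continuous_apply j).comp (continuous_subtype_val.comp continuous_snd))
  · rw [Set.eq_empty_iff_forall_notMem]
    rintro ⟨w, w'⟩ ⟨h1, h2⟩
    have : w = w' := by
      apply Subtype.ext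
      funext j
      refine (Set.mem_iInter.1 h2 j.natAbs) j ?_
      simp only [Finset.mem_Icc]; omega
    subst this
    simp only [Set.mem_setOf_eq, sub_self, norm_zero] at h1
    linarith
  · refine directed_of_isDirected_le ?_
    intro a b hab p hp j hj
    apply hp
    simp only [Finset.mem_Icc] at hj ⊢
    omega

open Classical in
lemma aux_weyl {α : Type*} (x y : ℤ → α) (δ : ℝ) (h : weylDist x y < δ) :
    ∃ N₀ : ℕ, ∀ N : ℕ, N₀ ≤ N → ∀ ℓ : ℤ,
      ∑ n ∈ Finset.Ico ℓ (ℓ + N), (if x n = y n then (0 : ℝ) else 1) ≤ δ * N := by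
  have hle : ∀ (N : ℕ) (ℓ : ℤ), (1 / N : ℝ) *
      ∑ n ∈ Finset.Ico ℓ (ℓ + N), Set.indicator {n : ℤ | x n ≠ y n} (fun _ => (1 : ℝ)) n ≤ 1 := by
    intro N ℓ
    have h1 : ∑ n ∈ Finset.Ico ℓ (ℓ + N), Set.indicator {n : ℤ | x n ≠ y n} (fun _ => (1 : ℝ)) n
        ≤ N := by
      refine (Finset.sum_le_card_nsmul _ _ 1 ?_).trans ?_
      · intro n _
        exact Set.indicator_le_self' (fun _ _ => zero_le_one) n
      · simp
    rw [one_div, inv_mul_eq_div]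
    exact div_le_one_of_le₀ h1 (by positivity)
  have hbdd : ∀ N : ℕ, BddAbove (Set.range fun ℓ : ℤ => (1 / N : ℝ) *
      ∑ n ∈ Finset.Ico ℓ (ℓ + N), Set.indicator {n : ℤ | x n ≠ y n} (fun _ => (1 : ℝ)) n) := by
    intro N
    refine ⟨1, ?_⟩
    rintro _ ⟨ℓ, rfl⟩
    exact hle N ℓ
  have hev := eventually_lt_of_limsup_lt h
    (isBoundedUnder_of ⟨1, fun N => ciSup_le (hle N)⟩)
  obtain ⟨N₀, hN₀⟩ := eventually_atTop.1 hev
  refine ⟨N₀ + 1, fun N hN ℓ => ?_⟩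
  have h1 := (le_ciSup (hbdd N) ℓ).trans (hN₀ N (by omega)).le
  have hN0 : (0 : ℝ) < N := by exact_mod_cast (by omega : 0 < N)
  rw [one_div, inv_mul_eq_div, div_le_iff₀ hN0] at h1
  refine le_trans (le_of_eq (Finset.sum_congr rfl fun n _ => ?_)) h1
  by_cases hn : x n = y n <;> simp [hn]

lemma aux_per {α : Type*} (y : ℤ → α) (q : ℕ) (hy : ∀ n : ℤ, y (n + q) = y n) (n k : ℤ) :
    y (n + q * k) = y n := by
  have h : Function.Periodic y (q : ℤ) := hy
  have := h.int_mul k n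
  rwa [mul_comm] at this

open Classical in
lemma aux_transfer {α : Type*} [TopologicalSpace α] [DiscreteTopology α] (x y : ℤ → α)
    (q : ℕ) (hq : 1 ≤ q) (hy : ∀ n : ℤ, y (n + q) = y n) (δ : ℝ) (N₀ : ℕ)
    (h : ∀ N : ℕ, N₀ ≤ N → ∀ ℓ : ℤ,
      ∑ n ∈ Finset.Ico ℓ (ℓ + N), (if x n = y n then (0 : ℝ) else 1) ≤ δ * N)
    (z : ℤ → α) (hz : z ∈ orbitClosure x) :
    ∃ r : ℤ, ∀ N : ℕ, N₀ ≤ N → ∀ ℓ : ℤ,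
      ∑ n ∈ Finset.Ico ℓ (ℓ + N), (if z n = y (n + r) then (0 : ℝ) else 1) ≤ δ * N := by
  have hcl : IsClosed (⋃ r ∈ (Finset.range q : Set ℕ), {w : ℤ → α | ∀ N : ℕ, N₀ ≤ N → ∀ ℓ : ℤ,
      ∑ n ∈ Finset.Ico ℓ (ℓ + N), (if w n = y (n + r) then (0 : ℝ) else 1) ≤ δ * N}) := by
    refine (Finset.range q).finite_toSet.isClosed_biUnion fun r _ => ?_
    simp only [Set.ofPred_forall]
    refine isClosed_iInter fun N => isClosed_iInter fun _ => isClosed_iInter fun ℓ => ?_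
    refine isClosed_le (continuous_finsetSum _ fun n _ => ?_) continuous_const
    exact (continuous_of_discreteTopology
      (f := fun a : α => if a = y (n + r) then (0 : ℝ) else 1)).comp (continuous_apply n)
  have hsub := closure_minimal (s := Set.range fun k : ℤ => fun n : ℤ => x (n + k)) ?_ hcl
  · have := hsub hz
    simp only [Set.mem_iUnion] at this
    obtain ⟨r, _, hr⟩ := this
    exact ⟨r, hr⟩
  · rintro _ ⟨k, rfl⟩
    simp only [Set.mem_iUnion]
    have hq0 : (0 : ℤ) < q := by omega
    have hk0 := Int.emod_nonneg k hq0.ne'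
    have hk1 := Int.emod_lt_of_pos k hq0
    refine ⟨(k % q).toNat, by simp; omega, fun N hN ℓ => ?_⟩
    have h1 := h N hN (ℓ + k)
    refine le_trans (le_of_eq ?_) h1
    have e : ℓ + k + N = ℓ + N + k := by ring
    rw [e, ← Finset.map_add_right_Ico, Finset.sum_map]
    simp only [addRightEmbedding_apply]
    refine Finset.sum_congr rfl fun n _ => ?_
    have : y (n + ((k % q).toNat : ℤ)) = y (n + k) := by
      rw [Int.toNat_of_nonneg hk0, ← aux_per y q hy (n + k % q) (k / q), add_assoc,
        Int.emod_add_mul_ediv]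
    simp only [this]

/-- If `A ⊂ ℂ` is finite and `x ∈ A^ℤ` is Weyl rationally almost periodic, then the
subshift `X_x` given by the orbit closure of `x` is orthogonal to every bounded
aperiodic sequence `u : ℕ → ℂ`. -/
theorem wrap_orthogonal_to_aperiodic (A : Set ℂ) (hA : A.Finite) (x : ℤ → ↥A)
    (hwrap : ∀ ε : ℝ, 0 < ε → ∃ y : ℤ → ↥A, IsPeriodicSeq y ∧ weylDist x y < ε)
    (hinv : Set.MapsTo shift (orbitClosure x) (orbitClosure x))
    (u : ℕ → ℂ) (Cu : ℝ) (hu : ∀ n : ℕ, ‖u n‖ ≤ Cu)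
    (haper : ∀ a b : ℕ, 1 ≤ a →
      Tendsto (fun M : ℕ => (1 / (M : ℂ)) * ∑ m ∈ Finset.Icc 1 M, u (a * m + b))
        atTop (nhds 0)) :
    ∀ (f : C(orbitClosure x, ℂ)) (z : orbitClosure x),
      Tendsto
        (fun N : ℕ => (1 / (N : ℂ)) *
          ∑ n ∈ Finset.Icc 1 N,
            f ((Set.MapsTo.restrict shift (orbitClosure x) (orbitClosure x) hinv)^[n] z)
              * u n)
        atTop (nhds 0) := by
  classical
  intro f z
  have : Finite A := hA
  have : CompactSpace (orbitClosure x) := isCompact_iff_compactSpace.1 isClosed_closure.isCompact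
  set T := Set.MapsTo.restrict shift (orbitClosure x) (orbitClosure x) hinv with hT
  have hTn : ∀ (n : ℕ) (j : ℤ), (T^[n] z).1 j = z.1 (j + n) := by
    intro n
    induction n with
    | zero => intro j; simp
    | succ n ih =>
      intro j
      rw [Function.iterate_succ_apply']
      have : (T (T^[n] z)).1 j = (T^[n] z).1 (j + 1) := rfl
      rw [this, ih]
      rw [show j + 1 + (n : ℤ) = j + ((n + 1 : ℕ) : ℤ) by push_cast; ring]
  have hCu : 0 ≤ Cu := (norm_nonneg _).trans (hu 0)
  obtain ⟨B, hB⟩ : ∃ B : ℝ, ∀ w, ‖f w‖ ≤ B := ⟨‖f‖, f.norm_coe_le_norm⟩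
  have hB0 : 0 ≤ B := (norm_nonneg _).trans (hB z)
  suffices hlo : (fun N : ℕ => ∑ n ∈ Finset.Icc 1 N, f (T^[n] z) * u n)
      =o[atTop] (fun N : ℕ => (N : ℂ)) by
    refine hlo.tendsto_div_nhds_zero.congr fun N => ?_
    ring
  rw [Asymptotics.isLittleO_iff]
  intro c hc
  obtain ⟨ε, hε, hεc⟩ : ∃ ε : ℝ, 0 < ε ∧ Cu * (2 * ε) ≤ c / 2 := by
    refine ⟨c / (4 * (Cu + 1)), by positivity, ?_⟩
    have : Cu * (2 * (c / (4 * (Cu + 1)))) = (c / 2) * (Cu / (Cu + 1)) := by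
      field_simp; norm_num
    rw [this]
    refine mul_le_of_le_one_right (by positivity) ?_
    exact div_le_one_of_le₀ (by linarith) (by positivity)
  obtain ⟨L, hL⟩ := aux_unif (orbitClosure x) f ε hε
  obtain ⟨δ, hδ, hδε⟩ : ∃ δ : ℝ, 0 < δ ∧ 2 * B * ((2 * L + 1) * δ) ≤ ε := by
    refine ⟨ε / ((2 * B + 1) * (2 * L + 1)), by positivity, ?_⟩
    have : 2 * B * ((2 * L + 1) * (ε / ((2 * B + 1) * (2 * L + 1))))
        = ε * (2 * B / (2 * B + 1)) := by
      field_simp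
    rw [this]
    refine mul_le_of_le_one_right hε.le ?_
    exact div_le_one_of_le₀ (by linarith) (by positivity)
  obtain ⟨y, ⟨q, hq, hy⟩, hxy⟩ := hwrap δ hδ
  obtain ⟨N₀, hN₀⟩ := aux_weyl x y δ hxy
  obtain ⟨r, hr⟩ := aux_transfer x y q hq hy δ N₀ hN₀ z.1 z.2
  set good : ℕ → Prop := fun n => ∀ j ∈ Finset.Icc (-(L : ℤ)) L, z.1 (j + n) = y (j + n + r)
    with hgood
  set H : ℕ → ℂ := fun s =>
    if h : ∃ m : ℕ, m % q = s ∧ good m then f (T^[h.choose] z) else 0 with hH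
  have hHB : ∀ s, ‖H s‖ ≤ B := by
    intro s
    simp only [hH]
    split_ifs
    · exact hB _
    · simpa using hB0
  have hclose : ∀ n, good n → ‖f (T^[n] z) - H (n % q)‖ ≤ ε := by
    intro n hn
    have hex : ∃ m : ℕ, m % q = n % q ∧ good m := ⟨n, rfl, hn⟩
    simp only [hH, dif_pos hex]
    obtain ⟨hm1, hm2⟩ := hex.choose_spec
    set m := hex.choose
    refine (hL _ _ fun j hj => ?_).le
    rw [hTn, hTn, hn j hj, hm2 j hj]
    have h1 : (n : ℤ) = (n % q : ℕ) + q * (n / q : ℕ) := by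
      exact_mod_cast (Nat.mod_add_div n q).symm
    have h2 : (m : ℤ) = (m % q : ℕ) + q * (m / q : ℕ) := by
      exact_mod_cast (Nat.mod_add_div m q).symm
    rw [hm1] at h2
    have e : j + (n : ℤ) + r = j + m + r + q * ((n / q : ℕ) - (m / q : ℕ)) := by
      linear_combination h1 - h2
    rw [e, aux_per y q hy]
  set d : ℤ → ℝ := fun n => if z.1 n = y (n + r) then (0 : ℝ) else 1 with hd
  have hd0 : ∀ n, 0 ≤ d n := by
    intro n; simp only [hd]; split_ifs <;> norm_num
  have hpt : ∀ n : ℕ, ‖f (T^[n] z) - H (n % q)‖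
      ≤ ε + 2 * B * ∑ j ∈ Finset.Icc (-(L : ℤ)) L, d (j + n) := by
    intro n
    by_cases hn : good n
    · have : 0 ≤ 2 * B * ∑ j ∈ Finset.Icc (-(L : ℤ)) L, d (j + n) :=
        mul_nonneg (by positivity) (Finset.sum_nonneg fun j _ => hd0 _)
      linarith [hclose n hn]
    · simp only [hgood, not_forall] at hn
      obtain ⟨j, hj, hne⟩ := hn
      have h1 : d (j + n) = 1 := by simp only [hd, if_neg hne]
      have h2 : (1 : ℝ) ≤ ∑ j ∈ Finset.Icc (-(L : ℤ)) L, d (j + n) := by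
        rw [← h1]
        exact Finset.single_le_sum (f := fun j => d (j + n)) (fun j _ => hd0 _) hj
      have h3 := norm_sub_le (f (T^[n] z)) (H (n % q))
      have h4 := hB (T^[n] z)
      have h5 := hHB (n % q)
      nlinarith
  have hper := aux_periodic_sum u Cu hu haper q hq H B hHB
  rw [Asymptotics.isLittleO_iff] at hper
  filter_upwards [hper (half_pos hc), eventually_ge_atTop N₀] with N hN1 hN2
  have hcount : ∀ j : ℤ, ∑ n ∈ Finset.Icc 1 N, d (j + n) ≤ δ * N := by
    intro j
    refine le_trans (le_of_eq ?_) (hr N hN2 (1 + j))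
    refine Finset.sum_bij (fun n _ => j + (n : ℤ)) ?_ ?_ ?_ ?_
    · intro n hn; simp only [Finset.mem_Icc, Finset.mem_Ico] at hn ⊢; omega
    · intro a _ b _ hab; simpa using hab
    · intro b hb
      simp only [Finset.mem_Ico] at hb
      exact ⟨(b - j).toNat, by simp only [Finset.mem_Icc]; omega, by omega⟩
    · intro n _; simp only [hd]; congr
  have hsum : ∑ n ∈ Finset.Icc 1 N, ‖f (T^[n] z) - H (n % q)‖ ≤ 2 * ε * N := by
    refine (Finset.sum_le_sum fun n _ => hpt n).trans ?_
    rw [Finset.sum_add_distrib, ← Finset.mul_sum, Finset.sum_comm]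
    have h1 : ∑ j ∈ Finset.Icc (-(L : ℤ)) L, ∑ n ∈ Finset.Icc 1 N, d (j + n)
        ≤ (2 * L + 1) * (δ * N) := by
      refine (Finset.sum_le_card_nsmul _ _ (δ * N) fun j _ => hcount j).trans (le_of_eq ?_)
      rw [nsmul_eq_mul, Int.card_Icc]
      congr 1
      rw [show ((L : ℤ) + 1 - -(L : ℤ)).toNat = 2 * L + 1 by omega]
      push_cast; ring
    have h2 := mul_le_mul_of_nonneg_left h1 (by positivity : 0 ≤ 2 * B)
    have h3 := mul_le_mul_of_nonneg_right hδε (Nat.cast_nonneg (α := ℝ) N)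
    simp only [Finset.sum_const, Nat.card_Icc, nsmul_eq_mul, Nat.add_sub_cancel]
    linarith
  have hdiff : ‖∑ n ∈ Finset.Icc 1 N, (f (T^[n] z) - H (n % q)) * u n‖ ≤ c / 2 * N := by
    refine (norm_sum_le _ _).trans ?_
    have h1 : ∑ n ∈ Finset.Icc 1 N, ‖(f (T^[n] z) - H (n % q)) * u n‖
        ≤ (∑ n ∈ Finset.Icc 1 N, ‖f (T^[n] z) - H (n % q)‖) * Cu := by
      rw [Finset.sum_mul]
      refine Finset.sum_le_sum fun n _ => ?_
      rw [norm_mul]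
      exact mul_le_mul_of_nonneg_left (hu n) (norm_nonneg _)
    have h2 := mul_le_mul_of_nonneg_right hsum hCu
    have h3 := mul_le_mul_of_nonneg_right hεc (Nat.cast_nonneg (α := ℝ) N)
    linarith
  have hsplit : ∑ n ∈ Finset.Icc 1 N, f (T^[n] z) * u n
      = ∑ n ∈ Finset.Icc 1 N, (f (T^[n] z) - H (n % q)) * u n
        + ∑ n ∈ Finset.Icc 1 N, H (n % q) * u n := by
    rw [← Finset.sum_add_distrib]
    exact Finset.sum_congr rfl fun n _ => by ring
  rw [hsplit]
  refine (norm_add_le _ _).trans ?_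
  rw [Complex.norm_natCast] at hN1 ⊢
  linarith
end
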